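/- arXiv:2603.22069 — 7 statements merged into one kernel-verified Lean document; each statement's English description precedes it below -/
import Mathlib

section
/- Let ψ : [0,∞) → ℝ be a warping function satisfying the Cartan–Hadamard conditions, let n ≥ 2 be an integer, and define K_rad(r) = -ψ''(r)/ψ(r), K_tan(r) = -(ψ'(r)² − 1)/ψ(r)², and S(r) = 2(n−1)K_rad(r) + (n−1)(n−2)K_tan(r) for r > 0. If K_rad is monotone nondecreasing on (0,∞), then K_rad(r) ≥ K_tan(r) for every r > 0, K_tan is monotone nondecreasing on (0,∞), and S is monotone nondecreasing on (0,∞). If instead K_rad is monotone nonincreasing on (0,∞), then K_rad(r) ≤ K_tan(r) for every r > 0, K_tan is monotone nonincreasing, and S is monotone nonincreasing. -/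
/-!
`K_tan` is the quotient of `1 - ψ'²` by `ψ²`. Both functions vanish at `0`, and the quotient of
their derivatives `-2ψ'ψ''` and `2ψψ'` is `K_rad`; moreover `ψ' ≥ ψ'(0) = 1` by convexity, so `ψ²`
is nondecreasing. Hence the monotone form of l'Hôpital's rule applies: if `f a = g a = 0` and
`f' = k g'` with `g' ≥ 0` and `k` nondecreasing, then `f / g ≤ k` and `f / g` is nondecreasing.
Replacing `f` and `k` by their negatives gives the nonincreasing case.
-/

open Set

theorem sub_le_sub_of_hasDerivAt_le {f g f' g' : ℝ → ℝ} {x y : ℝ} (hxy : x ≤ y)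
    (hfc : ContinuousOn f (Icc x y)) (hgc : ContinuousOn g (Icc x y))
    (hf : ∀ t ∈ Ioo x y, HasDerivAt f (f' t) t) (hg : ∀ t ∈ Ioo x y, HasDerivAt g (g' t) t)
    (hle : ∀ t ∈ Ioo x y, f' t ≤ g' t) : f y - f x ≤ g y - g x := by
  have hmono : MonotoneOn (g - f) (Icc x y) := by
    apply monotoneOn_of_hasDerivWithinAt_nonneg (f' := g' - f') (convex_Icc x y) (hgc.sub hfc)
    all_goals rw [interior_Icc]; intro t ht
    · exact ((hg t ht).sub (hf t ht)).hasDerivWithinAt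
    · exact sub_nonneg.2 (hle t ht)
  have h : g x - f x ≤ g y - f y := hmono (left_mem_Icc.2 hxy) (right_mem_Icc.2 hxy) hxy
  linarith

/-- The situation of l'Hôpital's rule on an interval `D` with left endpoint `a`: the functions `f`
and `g` vanish at `a`, `g` is positive and nondecreasing with derivative `g'`, and the quotient of
the derivatives is `k`. The last condition is stated as `f' = k g'`, so that `g'` may vanish. -/
structure IsDerivRatioOn (k f g g' : ℝ → ℝ) (D : Set ℝ) (a : ℝ) : Prop where
  convex : Convex ℝ D
  isLeast : IsLeast D a
  continuousOn_left : ContinuousOn f D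
  continuousOn_right : ContinuousOn g D
  left_eq_zero : f a = 0
  right_eq_zero : g a = 0
  hasDerivAt_left : ∀ x ∈ interior D, HasDerivAt f (k x * g' x) x
  hasDerivAt_right : ∀ x ∈ interior D, HasDerivAt g (g' x) x
  deriv_nonneg : ∀ x ∈ interior D, 0 ≤ g' x
  pos : ∀ x ∈ interior D, 0 < g x

namespace IsDerivRatioOn

variable {k f g g' : ℝ → ℝ} {D : Set ℝ} {a : ℝ}

theorem neg (h : IsDerivRatioOn k f g g' D a) : IsDerivRatioOn (-k) (-f) g g' D a :=
  { h with
    continuousOn_left := h.continuousOn_left.neg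
    left_eq_zero := neg_eq_zero.2 h.left_eq_zero
    hasDerivAt_left := fun x hx ↦ by
      simpa only [Pi.neg_apply, neg_mul] using (h.hasDerivAt_left x hx).neg }

theorem le_mul_of_monotoneOn (h : IsDerivRatioOn k f g g' D a) (hk : MonotoneOn k (interior D))
    {x : ℝ} (hx : x ∈ interior D) : f x ≤ k x * g x := by
  have hxD : x ∈ D := interior_subset hx
  have hIcc : Icc a x ⊆ D := h.convex.ordConnected.out h.isLeast.1 hxD
  have hIoo : Ioo a x ⊆ interior D := interior_maximal (Ioo_subset_Icc_self.trans hIcc) isOpen_Ioo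
  have hsub : f x - f a ≤ k x * g x - k x * g a :=
    sub_le_sub_of_hasDerivAt_le (h.isLeast.2 hxD) (h.continuousOn_left.mono hIcc)
      ((h.continuousOn_right.mono hIcc).const_mul (k x))
      (fun t ht ↦ h.hasDerivAt_left t (hIoo ht))
      (fun t ht ↦ (h.hasDerivAt_right t (hIoo ht)).const_mul (k x))
      (fun t ht ↦ mul_le_mul_of_nonneg_right (hk (hIoo ht) hx ht.2.le)
        (h.deriv_nonneg t (hIoo ht)))
  simpa only [h.left_eq_zero, h.right_eq_zero, mul_zero, sub_zero] using hsub

theorem div_le_of_monotoneOn (h : IsDerivRatioOn k f g g' D a) (hk : MonotoneOn k (interior D))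
    {x : ℝ} (hx : x ∈ interior D) : f x / g x ≤ k x :=
  (div_le_iff₀ (h.pos x hx)).2 (h.le_mul_of_monotoneOn hk hx)

theorem monotoneOn_right (h : IsDerivRatioOn k f g g' D a) : MonotoneOn g (interior D) :=
  monotoneOn_of_hasDerivWithinAt_nonneg h.convex.interior
    (h.continuousOn_right.mono interior_subset)
    (by simpa only [interior_interior] using
      fun x hx ↦ (h.hasDerivAt_right x hx).hasDerivWithinAt)
    (by simpa only [interior_interior] using h.deriv_nonneg)

theorem mul_sub_le_sub_of_monotoneOn (h : IsDerivRatioOn k f g g' D a)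
    (hk : MonotoneOn k (interior D)) {x y : ℝ} (hx : x ∈ interior D) (hy : y ∈ interior D)
    (hxy : x ≤ y) : k x * (g y - g x) ≤ f y - f x := by
  have hIcc : Icc x y ⊆ interior D := h.convex.interior.ordConnected.out hx hy
  have hIoo : Ioo x y ⊆ interior D := Ioo_subset_Icc_self.trans hIcc
  have hIccD : Icc x y ⊆ D := hIcc.trans interior_subset
  rw [mul_sub]
  exact sub_le_sub_of_hasDerivAt_le hxy ((h.continuousOn_right.mono hIccD).const_mul (k x))
    (h.continuousOn_left.mono hIccD)
    (fun t ht ↦ (h.hasDerivAt_right t (hIoo ht)).const_mul (k x))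
    (fun t ht ↦ h.hasDerivAt_left t (hIoo ht))
    (fun t ht ↦ mul_le_mul_of_nonneg_right (hk hx (hIoo ht) ht.1.le)
      (h.deriv_nonneg t (hIoo ht)))

-- The slope `f x / g x` from `a` to `x` is at most `k x`, which is at most the slope from `x` to
-- `y`; the slope from `a` to `y` is a weighted mean of the two.
theorem monotoneOn_div (h : IsDerivRatioOn k f g g' D a) (hk : MonotoneOn k (interior D)) :
    MonotoneOn (fun x ↦ f x / g x) (interior D) := by
  intro x hx y hy hxy
  have hgx : 0 ≤ g x := (h.pos x hx).le
  have hgxy : 0 ≤ g y - g x := sub_nonneg.2 (h.monotoneOn_right hx hy hxy)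
  refine (div_le_div_iff₀ (h.pos x hx) (h.pos y hy)).2 ?_
  calc f x * g y = f x * (g y - g x) + f x * g x := by ring
    _ ≤ k x * g x * (g y - g x) + f x * g x := by
      gcongr
      exact h.le_mul_of_monotoneOn hk hx
    _ = (k x * (g y - g x) + f x) * g x := by ring
    _ ≤ (f y - f x + f x) * g x := by
      gcongr
      exact h.mul_sub_le_sub_of_monotoneOn hk hx hy hxy
    _ = f y * g x := by ring

theorem le_div_of_antitoneOn (h : IsDerivRatioOn k f g g' D a) (hk : AntitoneOn k (interior D))
    {x : ℝ} (hx : x ∈ interior D) : k x ≤ f x / g x := by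
  simpa only [Pi.neg_apply, neg_div, neg_le_neg_iff] using h.neg.div_le_of_monotoneOn hk.neg hx

theorem antitoneOn_div (h : IsDerivRatioOn k f g g' D a) (hk : AntitoneOn k (interior D)) :
    AntitoneOn (fun x ↦ f x / g x) (interior D) := by
  simpa only [Pi.neg_apply, neg_div, neg_neg] using (h.neg.monotoneOn_div hk.neg).neg

end IsDerivRatioOn

theorem continuousOn_deriv_of_contDiffOn {𝕜 F : Type*} [NontriviallyNormedField 𝕜]
    [NormedAddCommGroup F] [NormedSpace 𝕜 F] {f : 𝕜 → F} {s : Set 𝕜} (hf : ContDiffOn 𝕜 1 f s)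
    (hs : UniqueDiffOn 𝕜 s) (hfd : ∀ x ∈ s, DifferentiableAt 𝕜 f x) :
    ContinuousOn (deriv f) s :=
  (hf.continuousOn_derivWithin hs le_rfl).congr
    fun x hx ↦ ((hfd x hx).derivWithin (hs x hx)).symm

section HalfLine

variable {f : ℝ → ℝ} {a : ℝ}

theorem continuousOn_deriv_Ici (hf : ContDiffOn ℝ 1 f (Ici a)) (ha : DifferentiableAt ℝ f a) :
    ContinuousOn (deriv f) (Ici a) := by
  refine continuousOn_deriv_of_contDiffOn hf (uniqueDiffOn_Ici a) fun x hx ↦ ?_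
  rcases eq_or_lt_of_le (mem_Ici.1 hx) with rfl | hax
  · exact ha
  · exact (hf.contDiffAt (Ici_mem_nhds hax)).differentiableAt one_ne_zero

theorem differentiableAt_deriv_of_contDiffOn_Ici (hf : ContDiffOn ℝ 2 f (Ici a)) {x : ℝ}
    (hx : a < x) : DifferentiableAt ℝ (deriv f) x :=
  ((hf.contDiffAt (Ici_mem_nhds hx)).derivWithin one_add_one_eq_two.le).differentiableAt
    one_ne_zero

theorem monotoneOn_deriv_Ici (hf : ContDiffOn ℝ 2 f (Ici a)) (ha : DifferentiableAt ℝ f a)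
    (hf'' : ∀ x > a, 0 ≤ deriv (deriv f) x) : MonotoneOn (deriv f) (Ici a) := by
  apply monotoneOn_of_deriv_nonneg (convex_Ici a)
    (continuousOn_deriv_Ici (hf.of_le one_le_two) ha)
  all_goals rw [interior_Ici]
  · exact fun x hx ↦ (differentiableAt_deriv_of_contDiffOn_Ici hf hx).differentiableWithinAt
  · exact hf''

end HalfLine

section Curvature

/-- The radial sectional curvature `K_rad = -ψ'' / ψ` of the warped product metric
`dr² + ψ(r)² g_{𝕊ⁿ⁻¹}`. -/
noncomputable def radialCurvature (ψ : ℝ → ℝ) (r : ℝ) : ℝ :=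
  -(deriv (deriv ψ) r) / ψ r

/-- The tangential sectional curvature `K_tan = -(ψ'² - 1) / ψ²` of the warped product metric
`dr² + ψ(r)² g_{𝕊ⁿ⁻¹}`. -/
noncomputable def tangentialCurvature (ψ : ℝ → ℝ) (r : ℝ) : ℝ :=
  -((deriv ψ r) ^ 2 - 1) / (ψ r) ^ 2

/-- The scalar curvature of the `n`-dimensional warped product metric `dr² + ψ(r)² g_{𝕊ⁿ⁻¹}`,
expressed through its sectional curvatures. -/
noncomputable def scalarCurvature (n : ℕ) (ψ : ℝ → ℝ) (r : ℝ) : ℝ :=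
  2 * ((n : ℝ) - 1) * radialCurvature ψ r +
    ((n : ℝ) - 1) * ((n : ℝ) - 2) * tangentialCurvature ψ r

variable {ψ : ℝ → ℝ}

theorem hasDerivAt_neg_deriv_sq_sub_one {r : ℝ} (hψ' : DifferentiableAt ℝ (deriv ψ) r)
    (hψr : ψ r ≠ 0) :
    HasDerivAt (fun s ↦ -((deriv ψ s) ^ 2 - 1))
      (radialCurvature ψ r * (2 * ψ r * deriv ψ r)) r := by
  refine (((hψ'.hasDerivAt.fun_pow 2).sub_const 1).fun_neg).congr_deriv ?_
  rw [radialCurvature]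
  field_simp
  ring

theorem isDerivRatioOn_radialCurvature (hψ : ContDiffOn ℝ 2 ψ (Ici 0)) (hψ0 : ψ 0 = 0)
    (hψ'0 : deriv ψ 0 = 1) (hψpos : ∀ r > 0, 0 < ψ r) (hψ' : ∀ r > 0, 0 ≤ deriv ψ r) :
    IsDerivRatioOn (radialCurvature ψ) (fun r ↦ -((deriv ψ r) ^ 2 - 1)) (fun r ↦ (ψ r) ^ 2)
      (fun r ↦ 2 * ψ r * deriv ψ r) (Ici 0) 0 where
  convex := convex_Ici 0
  isLeast := isLeast_Ici
  continuousOn_left := by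
    have hψd0 : DifferentiableAt ℝ ψ 0 := differentiableAt_of_deriv_ne_zero (by simp [hψ'0])
    exact (((continuousOn_deriv_Ici (hψ.of_le one_le_two) hψd0).pow 2).sub continuousOn_const).neg
  continuousOn_right := hψ.continuousOn.pow 2
  left_eq_zero := by simp [hψ'0]
  right_eq_zero := by simp [hψ0]
  hasDerivAt_left := by
    rw [interior_Ici]
    exact fun r hr ↦ hasDerivAt_neg_deriv_sq_sub_one
      (differentiableAt_deriv_of_contDiffOn_Ici hψ hr) (hψpos r hr).ne'
  hasDerivAt_right := by
    rw [interior_Ici]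
    intro r hr
    have hψd : DifferentiableAt ℝ ψ r :=
      (hψ.contDiffAt (Ici_mem_nhds hr)).differentiableAt two_ne_zero
    simpa using hψd.hasDerivAt.fun_pow 2
  deriv_nonneg := by
    rw [interior_Ici]
    exact fun r hr ↦ mul_nonneg (mul_nonneg zero_le_two (hψpos r hr).le) (hψ' r hr)
  pos := by
    rw [interior_Ici]
    exact fun r hr ↦ pow_pos (hψpos r hr) 2

theorem scalarCurvature_le_scalarCurvature {n : ℕ} (hn : 2 ≤ n) {r s : ℝ}
    (hrad : radialCurvature ψ r ≤ radialCurvature ψ s)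
    (htan : tangentialCurvature ψ r ≤ tangentialCurvature ψ s) :
    scalarCurvature n ψ r ≤ scalarCurvature n ψ s := by
  have hn' : (2 : ℝ) ≤ n := mod_cast hn
  have hn1 : 0 ≤ (n : ℝ) - 1 := by linarith
  have hn2 : 0 ≤ (n : ℝ) - 2 := by linarith
  exact add_le_add (mul_le_mul_of_nonneg_left hrad (mul_nonneg zero_le_two hn1))
    (mul_le_mul_of_nonneg_left htan (mul_nonneg hn1 hn2))

end Curvature

theorem stmt_2_general {n : ℕ} (hn : 2 ≤ n) {ψ : ℝ → ℝ} (hψ : ContDiffOn ℝ 2 ψ (Ici 0))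
    (hψ0 : ψ 0 = 0) (hψ'0 : deriv ψ 0 = 1) (hψpos : ∀ r > 0, 0 < ψ r)
    (hψ' : ∀ r > 0, 0 ≤ deriv ψ r) :
    (MonotoneOn (radialCurvature ψ) (Ioi 0) →
      (∀ r > 0, tangentialCurvature ψ r ≤ radialCurvature ψ r) ∧
      MonotoneOn (tangentialCurvature ψ) (Ioi 0) ∧ MonotoneOn (scalarCurvature n ψ) (Ioi 0)) ∧
    (AntitoneOn (radialCurvature ψ) (Ioi 0) →
      (∀ r > 0, radialCurvature ψ r ≤ tangentialCurvature ψ r) ∧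
      AntitoneOn (tangentialCurvature ψ) (Ioi 0) ∧ AntitoneOn (scalarCurvature n ψ) (Ioi 0)) := by
  have hratio := isDerivRatioOn_radialCurvature hψ hψ0 hψ'0 hψpos hψ'
  rw [← interior_Ici]
  refine ⟨fun hrad ↦ ?_, fun hrad ↦ ?_⟩
  · have htan : MonotoneOn (tangentialCurvature ψ) (interior (Ici 0)) := hratio.monotoneOn_div hrad
    exact ⟨fun r hr ↦ hratio.div_le_of_monotoneOn hrad (interior_Ici.ge hr), htan,
      fun r hr s hs hrs ↦
        scalarCurvature_le_scalarCurvature hn (hrad hr hs hrs) (htan hr hs hrs)⟩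
  · have htan : AntitoneOn (tangentialCurvature ψ) (interior (Ici 0)) := hratio.antitoneOn_div hrad
    exact ⟨fun r hr ↦ hratio.le_div_of_antitoneOn hrad (interior_Ici.ge hr), htan,
      fun r hr s hs hrs ↦
        scalarCurvature_le_scalarCurvature hn (hrad hr hs hrs) (htan hr hs hrs)⟩

/-- For a Cartan–Hadamard warping function ψ and n ≥ 2, if K_rad is
monotone nondecreasing on (0,∞) then K_rad ≥ K_tan on (0,∞), K_tan is monotone
nondecreasing, and the scalar curvature S is monotone nondecreasing; if K_rad is
monotone nonincreasing then the reversed conclusions hold. -/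
theorem stmt_2 (n : ℕ) (hn : 2 ≤ n) (ψ : ℝ → ℝ)
    (hψ : ContDiffOn ℝ (⊤ : ℕ∞) ψ (Set.Ici 0))
    (hψ0 : ψ 0 = 0) (hψ'0 : deriv ψ 0 = 1) (hψpos : ∀ r > (0:ℝ), 0 < ψ r)
    (hψ'' : ∀ r ≥ (0:ℝ), 0 ≤ deriv (deriv ψ) r)
    (Krad Ktan S : ℝ → ℝ)
    (hKrad : Krad = fun r => -(deriv (deriv ψ) r) / ψ r)
    (hKtan : Ktan = fun r => -((deriv ψ r) ^ 2 - 1) / (ψ r) ^ 2)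
    (hS : S = fun r => 2 * ((n:ℝ) - 1) * Krad r + ((n:ℝ) - 1) * ((n:ℝ) - 2) * Ktan r) :
    (MonotoneOn Krad (Set.Ioi 0) →
      (∀ r > (0:ℝ), Ktan r ≤ Krad r) ∧
      MonotoneOn Ktan (Set.Ioi 0) ∧ MonotoneOn S (Set.Ioi 0)) ∧
    (AntitoneOn Krad (Set.Ioi 0) →
      (∀ r > (0:ℝ), Krad r ≤ Ktan r) ∧
      AntitoneOn Ktan (Set.Ioi 0) ∧ AntitoneOn S (Set.Ioi 0)) := by
  subst hKrad hKtan hS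
  have hψ2 : ContDiffOn ℝ 2 ψ (Ici 0) := contDiffOn_infty.1 hψ 2
  have hψ'mono : MonotoneOn (deriv ψ) (Ici 0) :=
    monotoneOn_deriv_Ici hψ2 (differentiableAt_of_deriv_ne_zero (by simp [hψ'0]))
      fun r hr ↦ hψ'' r hr.le
  exact stmt_2_general hn hψ2 hψ0 hψ'0 hψpos fun r hr ↦
    zero_le_one.trans (hψ'0.ge.trans (hψ'mono self_mem_Ici hr.le hr.le))
end

section
/- Let ψ : [0,∞) → ℝ be smooth with ψ(r) > 0 and ψ'(r) > 0 for all r > 0, and define K_rad(r) = -ψ''(r)/ψ(r) and K_tan(r) = -(ψ'(r)² − 1)/ψ(r)². If K_rad(r) ≤ K_tan(r) for every r > 0, then K_tan is monotone nonincreasing on (0,∞). -/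
open Set

theorem hasDerivAt_tangentialCurvature {ψ : ℝ → ℝ} {r : ℝ} (hψ : DifferentiableAt ℝ ψ r)
    (hψ' : DifferentiableAt ℝ (deriv ψ) r) (hψ0 : ψ r ≠ 0) :
    HasDerivAt (tangentialCurvature ψ)
      (2 * logDeriv ψ r * (radialCurvature ψ r - tangentialCurvature ψ r)) r := by
  have h_quotient := ((hψ'.hasDerivAt.fun_pow 2).sub_const 1).fun_neg.fun_div
    (hψ.hasDerivAt.fun_pow 2) (pow_ne_zero 2 hψ0)
  refine h_quotient.congr_deriv ?_
  simp only [radialCurvature, tangentialCurvature, logDeriv_apply]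
  field_simp
  push_cast
  ring

theorem stmt_4_general {ψ : ℝ → ℝ} {s : Set ℝ} (hs : IsOpen s) (hconv : Convex ℝ s)
    (hψ : DifferentiableOn ℝ ψ s) (hψ' : DifferentiableOn ℝ (deriv ψ) s)
    (hpos : ∀ r ∈ s, 0 < ψ r) (hderiv : ∀ r ∈ s, 0 ≤ deriv ψ r)
    (hle : ∀ r ∈ s, radialCurvature ψ r ≤ tangentialCurvature ψ r) :
    AntitoneOn (tangentialCurvature ψ) s := by
  have hK (r : ℝ) (hr : r ∈ s) := hasDerivAt_tangentialCurvature
    (hψ.differentiableAt (hs.mem_nhds hr)) (hψ'.differentiableAt (hs.mem_nhds hr)) (hpos r hr).ne'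
  refine antitoneOn_of_hasDerivWithinAt_nonpos hconv (HasDerivAt.continuousOn hK)
    (fun r hr ↦ (hK r (interior_subset hr)).hasDerivWithinAt) fun r hr ↦ ?_
  replace hr := interior_subset hr
  have hlog : 0 ≤ logDeriv ψ r := div_nonneg (hderiv r hr) (hpos r hr).le
  exact mul_nonpos_of_nonneg_of_nonpos (by positivity) (sub_nonpos.2 (hle r hr))

/-- For a warping function ψ (smooth, with ψ > 0 and ψ' > 0 on (0,∞)),
if K_rad ≤ K_tan everywhere on (0,∞) then K_tan is monotone nonincreasing on (0,∞). -/
theorem stmt_4 (ψ : ℝ → ℝ) (hψ : ContDiffOn ℝ (⊤ : ℕ∞) ψ (Set.Ici 0))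
    (hψ0 : ψ 0 = 0) (hψpos : ∀ r > (0:ℝ), 0 < ψ r)
    (hψ'pos : ∀ r > (0:ℝ), 0 < deriv ψ r)
    (Krad Ktan : ℝ → ℝ)
    (hKrad : Krad = fun r => -(deriv (deriv ψ) r) / ψ r)
    (hKtan : Ktan = fun r => -((deriv ψ r) ^ 2 - 1) / (ψ r) ^ 2)
    (hle : ∀ r > (0:ℝ), Krad r ≤ Ktan r) :
    AntitoneOn Ktan (Set.Ioi 0) := by
  subst hKrad hKtan
  obtain ⟨hd, hd'⟩ :=
    (contDiffOn_infty_iff_deriv_of_isOpen isOpen_Ioi).1 (hψ.mono Ioi_subset_Ici_self)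
  exact stmt_4_general isOpen_Ioi (convex_Ioi 0) hd (hd'.differentiableOn (by simp)) hψpos
    (fun r hr ↦ (hψ'pos r hr).le) hle
end

section
/- Let n ≥ 2 be an integer and let ψ : (0,∞) → ℝ be smooth with ψ(r) > 0 and ψ'(r) > 0 for all r > 0. Set H(r) = (n−1)ψ'(r)/ψ(r) and K_rad(r) = -ψ''(r)/ψ(r). If K_rad is monotone nonincreasing on (0,∞) (i.e. K_rad'(r) ≤ 0 for all r > 0), then H' changes sign at most once on (0,∞): there do not exist 0 < r₁ < r₂ < r₃ with H'(r₁) > 0, H'(r₂) < 0, H'(r₃) > 0, nor with H'(r₁) < 0, H'(r₂) > 0, H'(r₃) < 0. -/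
/-!
Write `W(f, g) = f g' - f' g`, so that `(g / f)' = W(f, g) / f²`. Then `H'` is a nonnegative
multiple of `W(ψ, ψ')` and `-K_rad'` is a positive multiple of `W(ψ, ψ'')`. Differentiating cancels
the cross terms and gives `W(ψ, ψ')' = W(ψ, ψ'')`, so `W(ψ, ψ')` is nondecreasing when `K_rad` is
nonincreasing: once `H'` is positive it stays positive.
-/

/-- The Wronskian `W(f, g) = f g' - f' g` of two functions of one variable: the numerator of the
derivative of the quotient `g / f`. -/
noncomputable def wronskian {𝕜 : Type*} [NontriviallyNormedField 𝕜] (f g : 𝕜 → 𝕜) (x : 𝕜) : 𝕜 :=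
  f x * deriv g x - deriv f x * g x

section Field

variable {𝕜 : Type*} [NontriviallyNormedField 𝕜] {f g : 𝕜 → 𝕜} {x : 𝕜}

theorem deriv_fun_div_eq_wronskian_div_sq (hf : DifferentiableAt 𝕜 f x)
    (hg : DifferentiableAt 𝕜 g x) (hx : f x ≠ 0) :
    deriv (fun y => g y / f y) x = wronskian f g x / f x ^ 2 := by
  rw [deriv_fun_div hg hf hx, wronskian]
  ring

theorem deriv_fun_const_mul_div_eq_wronskian (c : 𝕜) (hf : DifferentiableAt 𝕜 f x)
    (hg : DifferentiableAt 𝕜 g x) (hx : f x ≠ 0) :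
    deriv (fun y => c * g y / f y) x = c * wronskian f g x / f x ^ 2 := by
  simp only [mul_div_assoc, deriv_const_mul_field, deriv_fun_div_eq_wronskian_div_sq hf hg hx]

theorem hasDerivAt_wronskian (hf : DifferentiableAt 𝕜 f x) (hf' : DifferentiableAt 𝕜 (deriv f) x)
    (hg : DifferentiableAt 𝕜 g x) (hg' : DifferentiableAt 𝕜 (deriv g) x) :
    HasDerivAt (wronskian f g) (f x * deriv (deriv g) x - deriv (deriv f) x * g x) x :=
  ((hf.hasDerivAt.mul hg'.hasDerivAt).sub (hf'.hasDerivAt.mul hg.hasDerivAt)).congr_deriv (by ring)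

theorem hasDerivAt_wronskian_self_deriv (hf : DifferentiableAt 𝕜 f x)
    (hf' : DifferentiableAt 𝕜 (deriv f) x) (hf'' : DifferentiableAt 𝕜 (deriv (deriv f)) x) :
    HasDerivAt (wronskian f (deriv f)) (wronskian f (deriv (deriv f)) x) x :=
  (hasDerivAt_wronskian hf hf' hf' hf'').congr_deriv (by rw [wronskian]; ring)

end Field

section Real

theorem wronskian_nonneg_of_deriv_neg_div_nonpos {f g : ℝ → ℝ} {x : ℝ}
    (hf : DifferentiableAt ℝ f x) (hg : DifferentiableAt ℝ g x) (hx : f x ≠ 0)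
    (h : deriv (fun y => -g y / f y) x ≤ 0) : 0 ≤ wronskian f g x := by
  simp only [neg_div, deriv.fun_neg, deriv_fun_div_eq_wronskian_div_sq hf hg hx] at h
  rwa [neg_nonpos, le_div_iff₀ (sq_pos_of_ne_zero hx), zero_mul] at h

variable {s : Set ℝ} {ψ : ℝ → ℝ}

theorem monotoneOn_wronskian_self_deriv (hs : IsOpen s) (hconv : Convex ℝ s)
    (hψ : DifferentiableOn ℝ ψ s) (hψ' : DifferentiableOn ℝ (deriv ψ) s)
    (hψ'' : DifferentiableOn ℝ (deriv (deriv ψ)) s)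
    (hW : ∀ r ∈ s, 0 ≤ wronskian ψ (deriv (deriv ψ)) r) :
    MonotoneOn (wronskian ψ (deriv ψ)) s := by
  have hderiv : ∀ r ∈ s,
      HasDerivAt (wronskian ψ (deriv ψ)) (wronskian ψ (deriv (deriv ψ)) r) r := fun r hr =>
    have hnhds := hs.mem_nhds hr
    hasDerivAt_wronskian_self_deriv (hψ.differentiableAt hnhds) (hψ'.differentiableAt hnhds)
      (hψ''.differentiableAt hnhds)
  exact monotoneOn_of_hasDerivWithinAt_nonneg hconv (HasDerivAt.continuousOn hderiv)
    (fun r hr => (hderiv r (interior_subset hr)).hasDerivWithinAt)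
    fun r hr => hW r (interior_subset hr)

theorem stmt_6_general (hs : IsOpen s) (hconv : Convex ℝ s) (hψ : ContDiffOn ℝ 3 ψ s)
    (hψ0 : ∀ r ∈ s, ψ r ≠ 0) {c : ℝ} (hc : 0 ≤ c) {H Krad : ℝ → ℝ}
    (hH : H = fun r => c * deriv ψ r / ψ r)
    (hKrad : Krad = fun r => -(deriv (deriv ψ) r) / ψ r)
    (hKdec : ∀ r ∈ s, deriv Krad r ≤ 0) {a b : ℝ} (ha : a ∈ s) (hb : b ∈ s) (hab : a ≤ b)
    (hHa : 0 < deriv H a) : 0 < deriv H b := by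
  have hψ' : ContDiffOn ℝ 2 (deriv ψ) s := hψ.deriv_of_isOpen hs (by norm_num)
  have hψ'' : ContDiffOn ℝ 1 (deriv (deriv ψ)) s := hψ'.deriv_of_isOpen hs (by norm_num)
  have hd := hψ.differentiableOn (by norm_num)
  have hd' := hψ'.differentiableOn (by norm_num)
  have hd'' := hψ''.differentiableOn (by norm_num)
  subst hH hKrad
  have wronskian_le : wronskian ψ (deriv ψ) a ≤ wronskian ψ (deriv ψ) b :=
    monotoneOn_wronskian_self_deriv hs hconv hd hd' hd''
      (fun r hr => wronskian_nonneg_of_deriv_neg_div_nonpos (hd.differentiableAt (hs.mem_nhds hr))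
        (hd''.differentiableAt (hs.mem_nhds hr)) (hψ0 r hr) (hKdec r hr)) ha hb hab
  have deriv_H_pos_iff : ∀ r ∈ s,
      0 < deriv (fun r => c * deriv ψ r / ψ r) r ↔ 0 < c * wronskian ψ (deriv ψ) r := by
    intro r hr
    rw [deriv_fun_const_mul_div_eq_wronskian c (hd.differentiableAt (hs.mem_nhds hr))
      (hd'.differentiableAt (hs.mem_nhds hr)) (hψ0 r hr),
      div_pos_iff_of_pos_right (sq_pos_of_ne_zero (hψ0 r hr))]
  rw [deriv_H_pos_iff a ha] at hHa
  rw [deriv_H_pos_iff b hb]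
  exact hHa.trans_le (mul_le_mul_of_nonneg_left wronskian_le hc)

end Real

/-- If the radial sectional curvature K_rad = -ψ''/ψ is monotone
nonincreasing on (0,∞) (K_rad' ≤ 0), then the derivative of the mean curvature
H = (n-1)ψ'/ψ changes sign at most once on (0,∞). -/
theorem stmt_6 (n : ℕ) (hn : 2 ≤ n) (ψ : ℝ → ℝ)
    (hψ : ContDiffOn ℝ (⊤ : ℕ∞) ψ (Set.Ioi 0))
    (hψpos : ∀ r > (0:ℝ), 0 < ψ r)
    (hψ'pos : ∀ r > (0:ℝ), 0 < deriv ψ r)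
    (H Krad : ℝ → ℝ)
    (hH : H = fun r => ((n:ℝ) - 1) * deriv ψ r / ψ r)
    (hKrad : Krad = fun r => -(deriv (deriv ψ) r) / ψ r)
    (hKdec : ∀ r > (0:ℝ), deriv Krad r ≤ 0) :
    (¬ ∃ r₁ r₂ r₃ : ℝ, 0 < r₁ ∧ r₁ < r₂ ∧ r₂ < r₃ ∧
        0 < deriv H r₁ ∧ deriv H r₂ < 0 ∧ 0 < deriv H r₃) ∧
    (¬ ∃ r₁ r₂ r₃ : ℝ, 0 < r₁ ∧ r₁ < r₂ ∧ r₂ < r₃ ∧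
        deriv H r₁ < 0 ∧ 0 < deriv H r₂ ∧ deriv H r₃ < 0) := by
  have hc : (0 : ℝ) ≤ n - 1 := sub_nonneg.2 (by exact_mod_cast one_le_two.trans hn)
  have pos_persists : ∀ a b, 0 < a → a < b → 0 < deriv H a → 0 < deriv H b := fun a b ha hab =>
    stmt_6_general isOpen_Ioi (convex_Ioi 0) (contDiffOn_infty.1 hψ 3)
      (fun r hr => (hψpos r hr).ne') hc hH hKrad hKdec ha (ha.trans hab) hab.le
  constructor
  · rintro ⟨r₁, r₂, _, h₁, h₁₂, -, hpos, hneg, -⟩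
    exact (pos_persists r₁ r₂ h₁ h₁₂ hpos).not_gt hneg
  · rintro ⟨r₁, r₂, r₃, h₁, h₁₂, h₂₃, -, hpos, hneg⟩
    exact (pos_persists r₂ r₃ (h₁.trans h₁₂) h₂₃ hpos).not_gt hneg
end

section
/- Let ψ : [0,∞) → ℝ be smooth with ψ(0) = 0, ψ'(0) = 1, and ψ(r) > 0 for r > 0, and define K_rad(r) = -ψ''(r)/ψ(r). If K_rad is monotone nondecreasing on (0,∞) (i.e. K_rad'(r) ≥ 0 for all r > 0), then the function r ↦ ψ'(r)/ψ(r) is monotone nonincreasing on (0,∞). In particular, the quantity ψ'(r)² + K_rad(r) ψ(r)² is monotone nondecreasing on [0,∞) with value 1 at r = 0, hence ψ'(r)² + K_rad(r)ψ(r)² ≥ 1 > 0 for all r > 0. -/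
/-!
Write `Q = ψ' ^ 2 + K * ψ ^ 2` for a solution of the Jacobi equation `ψ'' = -K * ψ`. Formally
`dQ = ψ ^ 2 dK`, since the terms containing derivatives of `ψ` cancel, so `Q` increases with `K`.
This needs no derivative of `K`: for `x ≤ z`, monotonicity of `K` gives
`Q z - Q x ≥ (ψ' z ^ 2 - ψ' x ^ 2) + K x * (ψ z ^ 2 - ψ x ^ 2)`,
and the right-hand side is `o(z - x)`. If `ψ` is `C^2` up to an endpoint at which it vanishes, then
`Q` tends to `ψ' ^ 2 ≥ 0` there, whence `Q ≥ 0` and `(ψ' / ψ)' = -Q / ψ ^ 2 ≤ 0`.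
-/

open Set Filter Topology

theorem hasDerivAt_deriv_of_contDiffOn {𝕜 F : Type*} [NontriviallyNormedField 𝕜]
    [NormedAddCommGroup F] [NormedSpace 𝕜 F] {f : 𝕜 → F} {s : Set 𝕜} {x : 𝕜}
    (hf : ContDiffOn 𝕜 2 f s) (hs : IsOpen s) (hx : x ∈ s) :
    HasDerivAt (deriv f) (deriv (deriv f) x) x :=
  have hf' : ContDiffOn 𝕜 1 (deriv f) s := hf.deriv_of_isOpen hs (by norm_num)
  ((hf'.differentiableOn one_ne_zero).differentiableAt (hs.mem_nhds hx)).hasDerivAt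

theorem derivWithin_derivWithin_Ici_of_lt {F : Type*} [NormedAddCommGroup F] [NormedSpace ℝ F]
    {f : ℝ → F} {a r : ℝ} (h : a < r) :
    derivWithin (derivWithin f (Ici a)) (Ici a) r = deriv (deriv f) r := by
  rw [derivWithin_of_mem_nhds (Ici_mem_nhds h)]
  refine EventuallyEq.deriv_eq ?_
  filter_upwards [Ioi_mem_nhds h] with x hx using derivWithin_of_mem_nhds (Ici_mem_nhds hx)

section MonotoneCoefficient

variable {s : Set ℝ} {f w w' K : ℝ → ℝ}

theorem monotoneOn_of_eventually_lt_slope (hs : s.OrdConnected) (hf : ContinuousOn f s)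
    (hslope : ∀ x ∈ s, ∀ ε < 0, ∀ᶠ z in 𝓝[s ∩ Ioi x] x, ε < slope f x z) :
    MonotoneOn f s := by
  intro a ha b hb hab
  have hsub : Icc a b ⊆ s := hs.out ha hb
  have slope_neg_lt : ∀ x ∈ Ico a b, ∀ ε, 0 < ε →
      ∃ᶠ z in 𝓝[>] x, slope (-f) x z < ε := by
    intro x hx ε hε
    have hle : 𝓝[>] x ≤ 𝓝[s ∩ Ioi x] x := nhdsWithin_le_iff.2 <| by
      filter_upwards [Ioo_mem_nhdsGT hx.2] with z hz
      exact ⟨hsub ⟨hx.1.trans hz.1.le, hz.2.le⟩, hz.1⟩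
    refine Eventually.frequently ?_
    filter_upwards [hle (hslope x (hsub ⟨hx.1, hx.2.le⟩) (-ε) (neg_lt_zero.2 hε))] with z hz
    rw [slope_neg_fun, Pi.neg_apply, Pi.neg_apply]
    exact neg_lt.1 hz
  exact neg_le_neg_iff.1 <| image_le_of_liminf_slope_right_le_deriv_boundary
    (B := fun _ => -f a) (hf.mono hsub).neg le_rfl continuousOn_const
    (fun x _ => hasDerivWithinAt_const x _ (-f a)) slope_neg_lt (right_mem_Icc.2 hab)

theorem monotoneOn_add_mul_of_hasDerivWithinAt (hs : s.OrdConnected) (hK : MonotoneOn K s)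
    (hw : ∀ x ∈ s, 0 ≤ w x) (hcont : ContinuousOn (fun x => f x + K x * w x) s)
    (hf' : ∀ x ∈ s, HasDerivWithinAt f (-(K x * w' x)) s x)
    (hw' : ∀ x ∈ s, HasDerivWithinAt w (w' x) s x) :
    MonotoneOn (fun x => f x + K x * w x) s := by
  refine monotoneOn_of_eventually_lt_slope hs hcont fun x hx ε hε => ?_
  have fixed_coeff_deriv : HasDerivWithinAt (fun z => f z + K x * w z) 0 (s ∩ Ioi x) x :=
    (((hf' x hx).add ((hw' x hx).const_mul (K x))).congr_deriv (neg_add_cancel _)).mono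
      inter_subset_left
  have fixed_coeff_slope : ∀ᶠ z in 𝓝[s ∩ Ioi x] x, ε < slope (fun z => f z + K x * w z) x z :=
    ((hasDerivWithinAt_iff_tendsto_slope' fun h => lt_irrefl x h.2).1 fixed_coeff_deriv).eventually
      (lt_mem_nhds hε)
  filter_upwards [fixed_coeff_slope, self_mem_nhdsWithin] with z hz ⟨hzs, hxz⟩
  have fixed_coeff_le : f z + K x * w z ≤ f z + K z * w z := by
    gcongr
    · exact hw z hzs
    · exact hK hx hzs (le_of_lt hxz)
  refine hz.trans_le ?_
  simp only [slope_def_field]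
  gcongr
  exact (sub_pos.2 hxz).le

end MonotoneCoefficient

section JacobiEnergy

/-- The energy `ψ' ^ 2 + K * ψ ^ 2` attached to the Jacobi equation `ψ'' + K * ψ = 0`. For a warping
function `ψ` with radial curvature `K`, its sign is opposite to that of the derivative of
`ψ' / ψ`. -/
noncomputable def jacobiEnergy (K ψ : ℝ → ℝ) (r : ℝ) : ℝ :=
  deriv ψ r ^ 2 + K r * ψ r ^ 2

variable {s : Set ℝ} {K ψ : ℝ → ℝ} {a r : ℝ}

theorem jacobiEnergy_of_eq_zero (hψ : ψ r = 0) : jacobiEnergy K ψ r = deriv ψ r ^ 2 := by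
  simp [jacobiEnergy, hψ]

theorem jacobiEnergy_eq_sub (hK : deriv (deriv ψ) r = -(K r * ψ r)) :
    jacobiEnergy K ψ r = deriv ψ r ^ 2 - deriv (deriv ψ) r * ψ r := by
  rw [jacobiEnergy, hK]
  ring

theorem monotoneOn_jacobiEnergy (hs : IsOpen s) (hs' : s.OrdConnected) (hψ : ContDiffOn ℝ 2 ψ s)
    (hK : ∀ r ∈ s, deriv (deriv ψ) r = -(K r * ψ r)) (hmono : MonotoneOn K s) :
    MonotoneOn (jacobiEnergy K ψ) s := by
  have hψ' : ContDiffOn ℝ 1 (deriv ψ) s := hψ.deriv_of_isOpen hs (by norm_num)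
  have energy_cont : ContinuousOn (jacobiEnergy K ψ) s :=
    ((hψ'.continuousOn.pow 2).sub
      ((hψ'.continuousOn_deriv_of_isOpen hs le_rfl).mul hψ.continuousOn)).congr
      fun r hr => jacobiEnergy_eq_sub (hK r hr)
  have sq_deriv : ∀ r ∈ s, HasDerivAt (fun r => ψ r ^ 2) (2 * ψ r * deriv ψ r) r := fun r hr => by
    have hψr := (hψ.differentiableOn two_ne_zero).differentiableAt (hs.mem_nhds hr)
    exact (hψr.hasDerivAt.pow 2).congr_deriv (by simp)
  have deriv_sq_deriv : ∀ r ∈ s,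
      HasDerivAt (fun r => deriv ψ r ^ 2) (-(K r * (2 * ψ r * deriv ψ r))) r := fun r hr => by
    refine ((hasDerivAt_deriv_of_contDiffOn hψ hs hr).pow 2).congr_deriv ?_
    rw [hK r hr]
    ring
  exact monotoneOn_add_mul_of_hasDerivWithinAt hs' hmono (fun r _ => sq_nonneg (ψ r)) energy_cont
    (fun r hr => (deriv_sq_deriv r hr).hasDerivWithinAt)
    (fun r hr => (sq_deriv r hr).hasDerivWithinAt)

theorem hasDerivAt_logDeriv_of_jacobi (hψ : DifferentiableAt ℝ ψ r)
    (hψ' : DifferentiableAt ℝ (deriv ψ) r) (hne : ψ r ≠ 0)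
    (hK : deriv (deriv ψ) r = -(K r * ψ r)) :
    HasDerivAt (logDeriv ψ) (-jacobiEnergy K ψ r / ψ r ^ 2) r := by
  refine (hψ'.hasDerivAt.div hψ.hasDerivAt hne).congr_deriv ?_
  rw [jacobiEnergy_eq_sub hK]
  ring

theorem antitoneOn_logDeriv_of_jacobiEnergy_nonneg (hs : IsOpen s) (hs' : s.OrdConnected)
    (hψ : ContDiffOn ℝ 2 ψ s) (hne : ∀ r ∈ s, ψ r ≠ 0)
    (hK : ∀ r ∈ s, deriv (deriv ψ) r = -(K r * ψ r)) (hQ : ∀ r ∈ s, 0 ≤ jacobiEnergy K ψ r) :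
    AntitoneOn (logDeriv ψ) s := by
  have deriv_logDeriv : ∀ r ∈ s, HasDerivAt (logDeriv ψ) (-jacobiEnergy K ψ r / ψ r ^ 2) r :=
    fun r hr => hasDerivAt_logDeriv_of_jacobi
      ((hψ.differentiableOn two_ne_zero).differentiableAt (hs.mem_nhds hr))
      (hasDerivAt_deriv_of_contDiffOn hψ hs hr).differentiableAt (hne r hr) (hK r hr)
  refine antitoneOn_of_deriv_nonpos hs'.convex
    (fun r hr => (deriv_logDeriv r hr).continuousAt.continuousWithinAt) ?_ ?_ <;>
    rw [hs.interior_eq]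
  · exact fun r hr => (deriv_logDeriv r hr).differentiableAt.differentiableWithinAt
  · intro r hr
    rw [(deriv_logDeriv r hr).deriv]
    exact div_nonpos_of_nonpos_of_nonneg (neg_nonpos.2 (hQ r hr)) (sq_nonneg _)

theorem continuousWithinAt_jacobiEnergy_of_eq_zero (hψ : ContDiffOn ℝ 2 ψ (Ici a))
    (hψa : DifferentiableAt ℝ ψ a) (ha : ψ a = 0)
    (hK : ∀ r > a, deriv (deriv ψ) r = -(K r * ψ r)) :
    ContinuousWithinAt (jacobiEnergy K ψ) (Ioi a) a := by
  set ψ₁ := derivWithin ψ (Ici a)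
  set ψ₂ := derivWithin ψ₁ (Ici a)
  have hψ₁ : ContDiffOn ℝ 1 ψ₁ (Ici a) := hψ.derivWithin (uniqueDiffOn_Ici a) (by norm_num)
  have hψ₂ : ContinuousOn ψ₂ (Ici a) :=
    hψ₁.continuousOn_derivWithin (uniqueDiffOn_Ici a) le_rfl
  have one_sided : ContinuousWithinAt (fun r => ψ₁ r ^ 2 - ψ₂ r * ψ r) (Ioi a) a :=
    ((hψ₁.continuousOn.pow 2).sub (hψ₂.mul hψ.continuousOn) a self_mem_Ici).mono
      Ioi_subset_Ici_self
  refine one_sided.congr (fun r hr => ?_) ?_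
  · rw [jacobiEnergy_eq_sub (hK r hr), ← derivWithin_derivWithin_Ici_of_lt hr,
      ← derivWithin_of_mem_nhds (Ici_mem_nhds hr)]
  · rw [jacobiEnergy_of_eq_zero ha, ha, mul_zero, sub_zero,
      ← hψa.derivWithin (uniqueDiffOn_Ici a a self_mem_Ici)]

theorem monotoneOn_jacobiEnergy_Ici (hψ : ContDiffOn ℝ 2 ψ (Ici a))
    (hψa : DifferentiableAt ℝ ψ a) (ha : ψ a = 0)
    (hK : ∀ r > a, deriv (deriv ψ) r = -(K r * ψ r)) (hmono : MonotoneOn K (Ioi a)) :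
    MonotoneOn (jacobiEnergy K ψ) (Ici a) := by
  rw [← Ioi_insert]
  exact (monotoneOn_jacobiEnergy isOpen_Ioi ordConnected_Ioi (hψ.mono Ioi_subset_Ici_self) hK
    hmono).insert_of_continuousWithinAt (mem_closure_iff_clusterPt.1 (by simp))
    (continuousWithinAt_jacobiEnergy_of_eq_zero hψ hψa ha hK)

end JacobiEnergy

theorem stmt_7_general {K ψ : ℝ → ℝ} {a : ℝ} (hψ : ContDiffOn ℝ 2 ψ (Ici a))
    (hψa : DifferentiableAt ℝ ψ a) (ha : ψ a = 0) (hne : ∀ r > a, ψ r ≠ 0)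
    (hK : ∀ r > a, deriv (deriv ψ) r = -(K r * ψ r)) (hmono : MonotoneOn K (Ioi a)) :
    AntitoneOn (logDeriv ψ) (Ioi a) ∧ MonotoneOn (jacobiEnergy K ψ) (Ici a) ∧
    jacobiEnergy K ψ a = deriv ψ a ^ 2 ∧ ∀ r > a, deriv ψ a ^ 2 ≤ jacobiEnergy K ψ r := by
  have energy_mono : MonotoneOn (jacobiEnergy K ψ) (Ici a) :=
    monotoneOn_jacobiEnergy_Ici hψ hψa ha hK hmono
  have energy_at : jacobiEnergy K ψ a = deriv ψ a ^ 2 := jacobiEnergy_of_eq_zero ha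
  have energy_ge : ∀ r > a, deriv ψ a ^ 2 ≤ jacobiEnergy K ψ r := fun r hr =>
    energy_at ▸ energy_mono self_mem_Ici (le_of_lt hr) (le_of_lt hr)
  exact ⟨antitoneOn_logDeriv_of_jacobiEnergy_nonneg isOpen_Ioi ordConnected_Ioi
    (hψ.mono Ioi_subset_Ici_self) hne hK fun r hr => (sq_nonneg _).trans (energy_ge r hr),
    energy_mono, energy_at, energy_ge⟩

/-- For a warping function ψ with ψ(0)=0, ψ'(0)=1, ψ>0 on (0,∞), if
K_rad = -ψ''/ψ is monotone nondecreasing on (0,∞), then ψ'/ψ is monotone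
nonincreasing on (0,∞); moreover ψ'² + K_rad ψ² is monotone nondecreasing on
[0,∞) with value 1 at r = 0, hence ψ'(r)² + K_rad(r) ψ(r)² ≥ 1 > 0 for r > 0. -/
theorem stmt_7 (ψ : ℝ → ℝ) (hψ : ContDiffOn ℝ (⊤ : ℕ∞) ψ (Set.Ici 0))
    (hψ0 : ψ 0 = 0) (hψ'0 : deriv ψ 0 = 1) (hψpos : ∀ r > (0:ℝ), 0 < ψ r)
    (Krad : ℝ → ℝ)
    (hKrad : Krad = fun r => -(deriv (deriv ψ) r) / ψ r)
    (hmono : MonotoneOn Krad (Set.Ioi 0)) :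
    AntitoneOn (fun r => deriv ψ r / ψ r) (Set.Ioi 0) ∧
    MonotoneOn (fun r => (deriv ψ r) ^ 2 + Krad r * (ψ r) ^ 2) (Set.Ici 0) ∧
    (deriv ψ 0) ^ 2 + Krad 0 * (ψ 0) ^ 2 = 1 ∧
    ∀ r > (0:ℝ), 1 ≤ (deriv ψ r) ^ 2 + Krad r * (ψ r) ^ 2 := by
  have hne : ∀ r > (0 : ℝ), ψ r ≠ 0 := fun r hr => (hψpos r hr).ne'
  have jacobi : ∀ r > (0 : ℝ), deriv (deriv ψ) r = -(Krad r * ψ r) := fun r hr => by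
    rw [hKrad, div_mul_cancel₀ _ (hne r hr), neg_neg]
  have hψ0_diff : DifferentiableAt ℝ ψ 0 :=
    differentiableAt_of_deriv_ne_zero (hψ'0 ▸ one_ne_zero)
  have := stmt_7_general (hψ.of_le (WithTop.coe_le_coe.2 le_top)) hψ0_diff hψ0 hne jacobi hmono
  rwa [hψ'0, one_pow] at this
end

section
/- Let n ≥ 2 be an integer and let ψ : [0,∞) → ℝ be a warping function satisfying the Cartan–Hadamard conditions. Then the isoperimetric quotient of centered geodesic balls, Q(r) = ψ(r)^{n(n−1)} / (∫₀^r ψ(t)^{n−1} dt)^{n−1}, is a monotone nondecreasing function of r on (0,∞). -/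
/-!
Let `0 < a < b` and compare `ψ` with its secant line through `a` and `b`, of slope `m > 0`. By
convexity the line lies below `ψ` on `[0, a]`, so it vanishes at some `z ∈ [0, a)` since `ψ 0 = 0`,
and it lies above `ψ` on `[a, b]`. Integrals of `φ` along the line over `[z, a]` and `[a, b]` are
computed by substitution. For increasing `φ ≥ 0`, with `Φ x = ∫₀ˣ φ` and `V r = ∫₀ʳ φ ∘ ψ`,
this gives `Φ (ψ a) ≤ m * V a` and `m * (V b - V a) ≤ Φ (ψ b) - Φ (ψ a)`,
hence `Φ (ψ a) / V a ≤ Φ (ψ b) / V b`. For `φ x = x ^ (n - 1)`, the isoperimetric quotient is a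
constant times the `(n - 1)`-st power of `Φ ∘ ψ / V`.
-/

open MeasureTheory Set

theorem div_le_add_div_add_of_le_mul {K : Type*} [Field K] [LinearOrder K] [IsStrictOrderedRing K]
    {p q v w m : K} (hv : 0 < v) (hw : 0 ≤ w) (hp : p ≤ m * v) (hq : m * w ≤ q) :
    p / v ≤ (p + q) / (v + w) := by
  rw [div_le_div_iff₀ hv (add_pos_of_pos_of_nonneg hv hw)]
  calc p * (v + w) = p * v + p * w := mul_add ..
    _ ≤ p * v + m * v * w := by gcongr
    _ = (p + m * w) * v := by ring
    _ ≤ (p + q) * v := by gcongr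

section Secant

/-- The affine function whose graph is the line through `(a, f a)` and `(b, f b)`, written in the
form `m * t + d` to which the substitution rule for integrals applies. -/
noncomputable def secant (f : ℝ → ℝ) (a b t : ℝ) : ℝ :=
  slope f a b * t + (f a - slope f a b * a)

variable {f : ℝ → ℝ} {s : Set ℝ} {a b t : ℝ}

theorem secant_eq_add_slope_mul (f : ℝ → ℝ) (a b t : ℝ) :
    secant f a b t = f a + slope f a b * (t - a) := by
  unfold secant
  ring

@[simp]
theorem secant_apply_left (f : ℝ → ℝ) (a b : ℝ) : secant f a b a = f a := by
  simp [secant_eq_add_slope_mul]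

@[simp]
theorem secant_apply_right (f : ℝ → ℝ) (a b : ℝ) : secant f a b b = f b := by
  have h := sub_smul_slope f a b
  rw [smul_eq_mul, vsub_eq_sub] at h
  rw [secant_eq_add_slope_mul]
  linarith

theorem continuous_secant (f : ℝ → ℝ) (a b : ℝ) : Continuous (secant f a b) := by
  unfold secant
  fun_prop

theorem monotone_secant (h : 0 ≤ slope f a b) : Monotone (secant f a b) :=
  (monotone_id.const_mul h).add_const _

theorem slope_mul_integral_comp_secant (f φ : ℝ → ℝ) (a b u v : ℝ) :
    slope f a b * ∫ t in u..v, φ (secant f a b t) = ∫ x in secant f a b u..secant f a b v, φ x :=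
  intervalIntegral.mul_integral_comp_mul_add _ _

theorem secant_le_of_convexOn (hf : ConvexOn ℝ s f) (ha : a ∈ s) (hb : b ∈ s) (hab : a < b)
    (ht : t ∈ s) (hta : t ≤ a) : secant f a b t ≤ f t := by
  obtain rfl | hta := hta.eq_or_lt
  · simp
  have hslope : slope f a t ≤ slope f a b :=
    hf.slope_mono ha ⟨ht, hta.ne⟩ ⟨hb, hab.ne'⟩ (hta.trans hab).le
  calc secant f a b t = f a + slope f a b * (t - a) := secant_eq_add_slope_mul ..
    _ ≤ f a + slope f a t * (t - a) := by
      linarith [mul_le_mul_of_nonpos_right hslope (sub_nonpos.2 hta.le)]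
    _ = f t := by rw [← secant_eq_add_slope_mul, secant_apply_right]

theorem le_secant_of_convexOn (hf : ConvexOn ℝ s f) (ha : a ∈ s) (hb : b ∈ s) (ht : t ∈ s)
    (hat : a ≤ t) (htb : t ≤ b) : f t ≤ secant f a b t := by
  obtain rfl | hat := hat.eq_or_lt
  · simp
  have hslope : slope f a t ≤ slope f a b :=
    hf.slope_mono ha ⟨ht, hat.ne'⟩ ⟨hb, (hat.trans_le htb).ne'⟩ htb
  calc f t = f a + slope f a t * (t - a) := by
        rw [← secant_eq_add_slope_mul, secant_apply_right]
    _ ≤ f a + slope f a b * (t - a) := by gcongr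
    _ = secant f a b t := (secant_eq_add_slope_mul ..).symm

end Secant

section Comparison

variable {f g h φ : ℝ → ℝ} {s : Set ℝ} {a b c : ℝ}

theorem intervalIntegrable_comp_of_monotoneOn (hφ : MonotoneOn φ s) (hg : MonotoneOn g (Icc a b))
    (hmaps : MapsTo g (Icc a b) s) (hab : a ≤ b) :
    IntervalIntegrable (fun t ↦ φ (g t)) volume a b :=
  MonotoneOn.intervalIntegrable (by rw [uIcc_of_le hab]; exact hφ.comp hg hmaps)

theorem integral_comp_le_integral_comp (hφ : MonotoneOn φ s) (hg : MonotoneOn g (Icc a b))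
    (hh : MonotoneOn h (Icc a b)) (hg_maps : MapsTo g (Icc a b) s) (hh_maps : MapsTo h (Icc a b) s)
    (hab : a ≤ b) (hgh : ∀ t ∈ Icc a b, g t ≤ h t) :
    ∫ t in a..b, φ (g t) ≤ ∫ t in a..b, φ (h t) :=
  intervalIntegral.integral_mono_on hab (intervalIntegrable_comp_of_monotoneOn hφ hg hg_maps hab)
    (intervalIntegrable_comp_of_monotoneOn hφ hh hh_maps hab)
    fun t ht ↦ hφ (hg_maps ht) (hh_maps ht) (hgh t ht)

theorem slope_mul_integral_comp_le_integral (hf : ConvexOn ℝ (Icc a b) f)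
    (hmono : MonotoneOn f (Icc a b)) (hφ : MonotoneOn φ (Icc (f a) (f b))) (hab : a ≤ b) :
    slope f a b * ∫ t in a..b, φ (f t) ≤ ∫ x in f a..f b, φ x := by
  have ha : a ∈ Icc a b := left_mem_Icc.2 hab
  have hb : b ∈ Icc a b := right_mem_Icc.2 hab
  have hslope : 0 ≤ slope f a b := hmono.slope_nonneg ha hb
  have hsec_maps : MapsTo (secant f a b) (Icc a b) (Icc (f a) (f b)) := by
    simpa only [secant_apply_left, secant_apply_right] using
      (monotone_secant hslope).mapsTo_Icc (a := a) (b := b)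
  calc slope f a b * ∫ t in a..b, φ (f t)
      ≤ slope f a b * ∫ t in a..b, φ (secant f a b t) := by
        gcongr
        exact integral_comp_le_integral_comp hφ hmono ((monotone_secant hslope).monotoneOn _)
          hmono.mapsTo_Icc hsec_maps hab fun t ht ↦ le_secant_of_convexOn hf ha hb ht ht.1 ht.2
    _ = ∫ x in f a..f b, φ x := by
        rw [slope_mul_integral_comp_secant, secant_apply_left, secant_apply_right]

theorem integral_le_slope_mul_integral_comp (hf : ConvexOn ℝ (Icc c b) f)
    (hmono : MonotoneOn f (Icc c b)) (hφ : MonotoneOn φ (Icc (f c) (f a))) (hφc : 0 ≤ φ (f c))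
    (hca : c ≤ a) (hab : a < b) :
    ∫ x in f c..f a, φ x ≤ slope f a b * ∫ t in c..a, φ (f t) := by
  have ha : a ∈ Icc c b := ⟨hca, hab.le⟩
  have hb : b ∈ Icc c b := right_mem_Icc.2 (hca.trans hab.le)
  have hsec_le {t : ℝ} (hct : c ≤ t) (hta : t ≤ a) : secant f a b t ≤ f t :=
    secant_le_of_convexOn hf ha hb hab ⟨hct, hta.trans hab.le⟩ hta
  have hslope : 0 ≤ slope f a b := hmono.slope_nonneg ha hb
  have hf_mono : MonotoneOn f (Icc c a) := hmono.mono (Icc_subset_Icc_right hab.le)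
  obtain ⟨z, ⟨hcz, hza⟩, hz⟩ : ∃ z ∈ Icc c a, secant f a b z = f c :=
    intermediate_value_Icc hca (continuous_secant f a b).continuousOn
      ⟨hsec_le le_rfl hca,
        (hf_mono.mapsTo_Icc (right_mem_Icc.2 hca)).1.trans_eq (secant_apply_left f a b).symm⟩
  have hsec_maps : MapsTo (secant f a b) (Icc z a) (Icc (f c) (f a)) := by
    simpa only [hz, secant_apply_left] using
      (monotone_secant hslope).mapsTo_Icc (a := z) (b := a)
  have hsub : Icc z a ⊆ Icc c a := Icc_subset_Icc_left hcz
  calc ∫ x in f c..f a, φ x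
      = slope f a b * ∫ t in z..a, φ (secant f a b t) := by
        rw [slope_mul_integral_comp_secant, hz, secant_apply_left]
    _ ≤ slope f a b * ∫ t in z..a, φ (f t) := by
        gcongr
        exact integral_comp_le_integral_comp hφ ((monotone_secant hslope).monotoneOn _)
          (hf_mono.mono hsub) hsec_maps (hf_mono.mapsTo_Icc.mono_left hsub) hza
          fun t ht ↦ hsec_le (hcz.trans ht.1) ht.2
    _ ≤ slope f a b * ∫ t in c..a, φ (f t) := by
        gcongr
        refine intervalIntegral.integral_mono_interval hcz hza le_rfl ?_
          (intervalIntegrable_comp_of_monotoneOn hφ hf_mono hf_mono.mapsTo_Icc hca)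
        filter_upwards [ae_restrict_mem measurableSet_Ioc] with t ht
        have hft := hf_mono.mapsTo_Icc (Ioc_subset_Icc_self ht)
        exact hφc.trans (hφ (left_mem_Icc.2 (hft.1.trans hft.2)) hft hft.1)

end Comparison

section Quotient

variable {f φ : ℝ → ℝ} {c : ℝ}

theorem monotoneOn_Ici_of_convexOn_of_forall_le (hf : ConvexOn ℝ (Ici c) f)
    (hle : ∀ t > c, f c ≤ f t) : MonotoneOn f (Ici c) := by
  intro x hx y hy hxy
  obtain rfl | hcx := (mem_Ici.1 hx).eq_or_lt
  · obtain rfl | hcy := hxy.eq_or_lt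
    exacts [le_rfl, hle y hcy]
  · exact hf.le_right_of_left_le'' self_mem_Ici hy hcx hxy (hle x hcx)

theorem monotoneOn_integral_div_integral_comp (hf : ConvexOn ℝ (Ici c) f)
    (hlt : ∀ t > c, f c < f t) (hφ : MonotoneOn φ (Ici (f c))) (hφc : 0 ≤ φ (f c))
    (hφpos : ∀ x > f c, 0 < φ x) :
    MonotoneOn (fun r ↦ (∫ x in f c..f r, φ x) / ∫ t in c..r, φ (f t)) (Ioi c) := by
  intro a (hca : c < a) b _ hab
  obtain rfl | hab := hab.eq_or_lt
  · rfl
  have hmono : MonotoneOn f (Ici c) :=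
    monotoneOn_Ici_of_convexOn_of_forall_le hf fun t ht ↦ (hlt t ht).le
  have hφ_int {u v : ℝ} (hu : f c ≤ u) (huv : u ≤ v) : IntervalIntegrable φ volume u v :=
    intervalIntegrable_comp_of_monotoneOn hφ monotoneOn_id (fun x hx ↦ hu.trans hx.1) huv
  have hφf_int {u v : ℝ} (hu : c ≤ u) (huv : u ≤ v) :
      IntervalIntegrable (fun t ↦ φ (f t)) volume u v :=
    intervalIntegrable_comp_of_monotoneOn hφ (hmono.mono fun t ht ↦ hu.trans ht.1)
      (fun t ht ↦ hmono.mapsTo_Ici (hu.trans ht.1)) huv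
  have hφf_pos {u v : ℝ} (hu : c ≤ u) (huv : u < v) : 0 < ∫ t in u..v, φ (f t) :=
    intervalIntegral.intervalIntegral_pos_of_pos_on (hφf_int hu huv.le)
      (fun t ht ↦ hφpos _ (hlt t (hu.trans_lt ht.1))) huv
  have hbelow : ∫ x in f c..f a, φ x ≤ slope f a b * ∫ t in c..a, φ (f t) :=
    integral_le_slope_mul_integral_comp (hf.subset Icc_subset_Ici_self (convex_Icc c b))
      (hmono.mono Icc_subset_Ici_self) (hφ.mono Icc_subset_Ici_self) hφc hca.le hab
  have habove : slope f a b * ∫ t in a..b, φ (f t) ≤ ∫ x in f a..f b, φ x :=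
    have hsub : Icc a b ⊆ Ici c := fun t ht ↦ hca.le.trans ht.1
    slope_mul_integral_comp_le_integral (hf.subset hsub (convex_Icc a b)) (hmono.mono hsub)
      (hφ.mono fun x hx ↦ (hlt a hca).le.trans hx.1) hab.le
  have hquot := div_le_add_div_add_of_le_mul (hφf_pos le_rfl hca) (hφf_pos hca.le hab).le
    hbelow habove
  rwa [intervalIntegral.integral_add_adjacent_intervals (hφf_int le_rfl hca.le)
      (hφf_int hca.le hab.le),
    intervalIntegral.integral_add_adjacent_intervals (hφ_int le_rfl (hlt a hca).le)
      (hφ_int (hlt a hca).le (hmono hca.le (hca.trans hab).le hab.le))] at hquot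

theorem monotoneOn_pow_succ_div_integral_pow (hf : ConvexOn ℝ (Ici c) f) (hfc : f c = 0)
    (hfpos : ∀ t > c, 0 < f t) (k : ℕ) :
    MonotoneOn (fun r ↦ f r ^ (k + 1) / ∫ t in c..r, f t ^ k) (Ioi c) := by
  have hmono : MonotoneOn (fun r ↦ (∫ x in f c..f r, x ^ k) / ∫ t in c..r, f t ^ k) (Ioi c) :=
    monotoneOn_integral_div_integral_comp (φ := (· ^ k)) hf (by simpa only [hfc] using hfpos)
      (hfc ▸ pow_left_monotoneOn) (by simp [hfc]) (fun x hx ↦ pow_pos (hfc ▸ hx) k)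
  intro a ha b hb hab
  have hquot := hmono ha hb hab
  simp only [integral_pow, hfc, zero_pow k.succ_ne_zero, sub_zero,
    div_right_comm _ ((k : ℝ) + 1)] at hquot
  rwa [div_le_div_iff_of_pos_right k.cast_add_one_pos] at hquot

end Quotient

theorem convexOn_of_contDiffOn_of_deriv2_nonneg {s : Set ℝ} {f : ℝ → ℝ} (hs : Convex ℝ s)
    (hf : ContDiffOn ℝ 2 f s) (hf'' : ∀ x ∈ interior s, 0 ≤ deriv^[2] f x) : ConvexOn ℝ s f := by
  have hf_int : ContDiffOn ℝ 2 f (interior s) := hf.mono interior_subset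
  have hf'_int : ContDiffOn ℝ 1 (deriv f) (interior s) :=
    hf_int.deriv_of_isOpen isOpen_interior one_add_one_eq_two.le
  exact convexOn_of_deriv2_nonneg hs hf.continuousOn (hf_int.differentiableOn two_ne_zero)
    (hf'_int.differentiableOn one_ne_zero) hf''

theorem stmt_9_general (n : ℕ) (hn : 1 ≤ n) (ψ : ℝ → ℝ) (hψ : ConvexOn ℝ (Ici 0) ψ)
    (hψ0 : ψ 0 = 0) (hψpos : ∀ r > (0 : ℝ), 0 < ψ r) :
    MonotoneOn
      (fun r => ψ r ^ (n * (n - 1)) / (∫ t in (0 : ℝ)..r, ψ t ^ (n - 1)) ^ (n - 1))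
      (Ioi 0) := by
  obtain ⟨k, rfl⟩ := Nat.exists_eq_add_of_le' hn
  have hbase := monotoneOn_pow_succ_div_integral_pow hψ hψ0 hψpos k
  intro a (ha : 0 < a) b hb hab
  have hψ_mono : MonotoneOn ψ (Ici 0) :=
    monotoneOn_Ici_of_convexOn_of_forall_le hψ fun t ht ↦ hψ0.trans_le (hψpos t ht).le
  have hψ_nonneg (t : ℝ) (ht : 0 ≤ t) : 0 ≤ ψ t := hψ0 ▸ hψ_mono self_mem_Ici ht ht
  have hnonneg : 0 ≤ ψ a ^ (k + 1) / ∫ t in (0 : ℝ)..a, ψ t ^ k :=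
    div_nonneg (pow_nonneg (hψ_nonneg a ha.le) _)
      (intervalIntegral.integral_nonneg ha.le fun t ht ↦ pow_nonneg (hψ_nonneg t ht.1) k)
  simpa only [div_pow, ← pow_mul, Nat.add_sub_cancel] using
    pow_le_pow_left₀ hnonneg (hbase ha hb hab) k

/-- For a Cartan–Hadamard warping function ψ and n ≥ 2, the
isoperimetric quotient of centered geodesic balls
Q(r) = ψ(r)^{n(n-1)} / (∫₀^r ψ^{n-1})^{n-1} is monotone nondecreasing on (0,∞). -/
theorem stmt_9 (n : ℕ) (hn : 2 ≤ n) (ψ : ℝ → ℝ)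
    (hψ : ContDiffOn ℝ (⊤ : ℕ∞) ψ (Set.Ici 0))
    (hψ0 : ψ 0 = 0) (hψ'0 : deriv ψ 0 = 1) (hψpos : ∀ r > (0:ℝ), 0 < ψ r)
    (hψ'' : ∀ r ≥ (0:ℝ), 0 ≤ deriv (deriv ψ) r) :
    MonotoneOn
      (fun r => ψ r ^ (n * (n - 1)) / (∫ t in (0:ℝ)..r, ψ t ^ (n - 1)) ^ (n - 1))
      (Set.Ioi 0) :=
  stmt_9_general n (one_le_two.trans hn) ψ
    (convexOn_of_contDiffOn_of_deriv2_nonneg (convex_Ici 0) (contDiffOn_infty.1 hψ 2)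
      fun r hr ↦ hψ'' r (interior_subset hr)) hψ0 hψpos
end

section
/- Let n ≥ 2 be an integer and let ψ : [0,∞) → ℝ be a warping function satisfying the Cartan–Hadamard conditions. Then for every r ≥ 0, ψ(r)^n ≥ n ∫₀^r ψ(t)^{n−1} dt. In particular, every geodesic ball centered at the pole of the warped product manifold with warping function ψ satisfies the Euclidean isoperimetric inequality Per(B_r)ⁿ ≥ nⁿ |B(0,1)| Vol(B_r)^{n−1}, where Per(B_r) = ω_n ψ(r)^{n−1}, Vol(B_r) = ω_n ∫₀^r ψ(t)^{n−1} dt, ω_n = n|B(0,1)|, and |B(0,1)| is the Euclidean volume of the unit ball in ℝⁿ. -/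
/-!
Monotonicity of `t ↦ ψ t - t` says that `ψ` grows at least at unit speed. Such a `ψ` is monotone,
hence differentiable almost everywhere, with `ψ' ≥ 1` and `(ψ ^ n)' ≥ n ψ ^ (n - 1)` there.
A monotone function increases by at least the integral of its a.e. derivative, so integrating
gives `n ∫ ψ ^ (n - 1) ≤ ψ ^ n`, and the power `n - 1` of this is the isoperimetric inequality.
A Cartan–Hadamard warping function is convex with slope `1` at the origin, so all its later slopes
are at least `1`.
-/

section UnitSpeed

open Set Filter MeasureTheory

variable {f : ℝ → ℝ} {a b c : ℝ} {s : Set ℝ}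

lemma monotoneOn_of_monotoneOn_sub_mul (hc : 0 ≤ c)
    (hf : MonotoneOn (fun t ↦ f t - c * t) s) : MonotoneOn f s := by
  intro x hx y hy hxy
  have h_incr : f x - c * x ≤ f y - c * y := hf hx hy hxy
  have h_lin : c * x ≤ c * y := mul_le_mul_of_nonneg_left hxy hc
  linarith

lemma ae_exists_hasDerivAt_ge_of_monotoneOn_sub_mul
    (hf : MonotoneOn (fun t ↦ f t - c * t) s) :
    ∀ᵐ t, t ∈ interior s → ∃ f', HasDerivAt f f' t ∧ c ≤ f' := by
  filter_upwards [hf.ae_differentiableWithinAt_of_mem] with t h_diff ht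
  have hs : s ∈ nhds t := mem_interior_iff_mem_nhds.mp ht
  have h_sub := (h_diff (interior_subset ht)).hasDerivWithinAt
  refine ⟨derivWithin (fun t ↦ f t - c * t) s t + c, ?_, ?_⟩
  · simpa only [Pi.add_apply, sub_add_cancel, id, mul_one] using
      (h_sub.hasDerivAt hs).fun_add ((hasDerivAt_id t).const_mul c)
  · exact le_add_of_nonneg_left hf.derivWithin_nonneg

theorem mul_integral_pow_le_pow_sub_pow (hab : a ≤ b) (hc : 0 ≤ c)
    (hf : MonotoneOn (fun t ↦ f t - c * t) (Icc a b)) (ha : 0 ≤ f a) (n : ℕ) :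
    n * c * ∫ t in a..b, f t ^ (n - 1) ≤ f b ^ n - f a ^ n := by
  have h_mono : MonotoneOn f (Icc a b) := monotoneOn_of_monotoneOn_sub_mul hc hf
  have h_nonneg : ∀ t ∈ Icc a b, 0 ≤ f t := fun t ht ↦
    ha.trans (h_mono (left_mem_Icc.mpr hab) ht ht.1)
  have h_pow (k : ℕ) : MonotoneOn (fun t ↦ f t ^ k) (uIcc a b) := by
    rw [uIcc_of_le hab]
    exact fun x hx y hy hxy ↦ pow_le_pow_left₀ (h_nonneg x hx) (h_mono hx hy hxy) k
  have h_deriv : (fun t ↦ n * c * f t ^ (n - 1))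
      ≤ᵐ[volume.restrict (Icc a b)] deriv (fun t ↦ f t ^ n) := by
    rw [← restrict_Ioo_eq_restrict_Icc, EventuallyLE, ae_restrict_iff' measurableSet_Ioo]
    filter_upwards [ae_exists_hasDerivAt_ge_of_monotoneOn_sub_mul hf] with t h_exists ht
    obtain ⟨f', hf', hcf'⟩ := h_exists (by rwa [interior_Icc])
    have h_coeff : 0 ≤ n * f t ^ (n - 1) :=
      mul_nonneg n.cast_nonneg (pow_nonneg (h_nonneg t (Ioo_subset_Icc_self ht)) _)
    rw [(hf'.fun_pow n).deriv, mul_right_comm]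
    exact mul_le_mul_of_nonneg_left hcf' h_coeff
  have h_endpoints : f a ^ n ≤ f b ^ n := h_pow n left_mem_uIcc right_mem_uIcc hab
  calc n * c * ∫ t in a..b, f t ^ (n - 1)
      = ∫ t in a..b, n * c * f t ^ (n - 1) := (intervalIntegral.integral_const_mul _ _).symm
    _ ≤ ∫ t in a..b, deriv (fun t ↦ f t ^ n) t :=
        intervalIntegral.integral_mono_ae_restrict hab
          ((h_pow (n - 1)).intervalIntegrable.const_mul _)
          (h_pow n).intervalIntegrable_deriv h_deriv
    _ ≤ f b ^ n - f a ^ n := by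
        have h_mem := (h_pow n).intervalIntegral_deriv_mem_uIcc
        rw [uIcc_of_le (sub_nonneg.mpr h_endpoints)] at h_mem
        exact h_mem.2

end UnitSpeed

section Convex

open Set

variable {f : ℝ → ℝ} {a c : ℝ}

lemma convexOn_of_contDiffOn_two_of_deriv2_nonneg {D : Set ℝ} (hD : Convex ℝ D)
    (hf : ContDiffOn ℝ 2 f D) (hf'' : ∀ x ∈ interior D, 0 ≤ deriv (deriv f) x) :
    ConvexOn ℝ D f := by
  have hf_int : ContDiffOn ℝ 2 f (interior D) := hf.mono interior_subset
  have hf'_int : ContDiffOn ℝ 1 (deriv f) (interior D) :=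
    hf_int.deriv_of_isOpen isOpen_interior (by norm_num)
  exact convexOn_of_deriv2_nonneg hD hf.continuousOn (hf_int.differentiableOn two_ne_zero)
    (hf'_int.differentiableOn one_ne_zero) hf''

lemma monotoneOn_sub_mul_of_convexOn_Ici (hf : ConvexOn ℝ (Ici a) f)
    (hf' : HasDerivWithinAt f c (Ici a) a) : MonotoneOn (fun t ↦ f t - c * t) (Ici a) := by
  intro x hx y hy hxy
  rcases hxy.eq_or_lt with rfl | hxy
  · exact le_rfl
  have h_slope : c ≤ (f y - f x) / (y - x) := by
    rw [← slope_def_field]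
    rcases (mem_Ici.mp hx).eq_or_lt with rfl | hax
    · exact hf.le_slope_of_hasDerivWithinAt hx hy hxy hf'
    · calc c ≤ slope f a x := hf.le_slope_of_hasDerivWithinAt self_mem_Ici hx hax hf'
        _ ≤ slope f x y := by
            simpa only [slope_def_field] using hf.slope_mono_adjacent self_mem_Ici hy hax hxy
  have h_incr : c * (y - x) ≤ f y - f x := (le_div_iff₀ (sub_pos.mpr hxy)).mp h_slope
  change f x - c * x ≤ f y - c * y
  linarith

lemma monotoneOn_sub_mul_of_deriv2_nonneg (hf : ContDiffOn ℝ 2 f (Ici a))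
    (hf' : HasDerivWithinAt f c (Ici a) a) (hf'' : ∀ x > a, 0 ≤ deriv (deriv f) x) :
    MonotoneOn (fun t ↦ f t - c * t) (Ici a) := by
  have h_convex : ConvexOn ℝ (Ici a) f :=
    convexOn_of_contDiffOn_two_of_deriv2_nonneg (convex_Ici a) hf (by rwa [interior_Ici])
  exact monotoneOn_sub_mul_of_convexOn_Ici h_convex hf'

end Convex

lemma isoperimetric_of_mul_le_pow {n : ℕ} (hn : n ≠ 0) {B I x : ℝ} (hB : 0 ≤ B) (hI : 0 ≤ I)
    (h : n * I ≤ x ^ n) :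
    (n : ℝ) ^ n * B * (n * B * I) ^ (n - 1) ≤ (n * B * x ^ (n - 1)) ^ n := by
  calc (n : ℝ) ^ n * B * (n * B * I) ^ (n - 1)
      = n ^ n * (B * B ^ (n - 1)) * (n * I) ^ (n - 1) := by
        rw [mul_right_comm (n : ℝ) B I, mul_pow (n * I)]
        ring
    _ = (n * B) ^ n * (n * I) ^ (n - 1) := by rw [mul_pow_sub_one hn, mul_pow (n : ℝ) B]
    _ ≤ (n * B) ^ n * (x ^ n) ^ (n - 1) := by gcongr
    _ = (n * B * x ^ (n - 1)) ^ n := by rw [mul_pow _ (x ^ (n - 1)), pow_right_comm]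

theorem stmt_10_general (n : ℕ) (hn : n ≠ 0) (ψ : ℝ → ℝ)
    (hψ : MonotoneOn (fun t ↦ ψ t - t) (Set.Ici 0)) (hψ0 : 0 ≤ ψ 0)
    (B ωn : ℝ) (hB : 0 ≤ B) (hω : ωn = (n : ℝ) * B) :
    (∀ r ≥ (0 : ℝ), (n : ℝ) * ∫ t in (0 : ℝ)..r, ψ t ^ (n - 1) ≤ ψ r ^ n) ∧
    (∀ r ≥ (0 : ℝ),
      (n : ℝ) ^ n * B * (ωn * ∫ t in (0 : ℝ)..r, ψ t ^ (n - 1)) ^ (n - 1)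
        ≤ (ωn * ψ r ^ (n - 1)) ^ n) := by
  have h_speed : MonotoneOn (fun t ↦ ψ t - 1 * t) (Set.Ici 0) := by
    simpa only [one_mul] using hψ
  have h_nonneg : ∀ t ≥ 0, 0 ≤ ψ t := fun t ht ↦
    hψ0.trans (monotoneOn_of_monotoneOn_sub_mul zero_le_one h_speed Set.self_mem_Ici ht ht)
  have h_volume : ∀ r ≥ (0 : ℝ), (n : ℝ) * ∫ t in (0 : ℝ)..r, ψ t ^ (n - 1) ≤ ψ r ^ n := by
    intro r hr
    have h_incr := mul_integral_pow_le_pow_sub_pow hr zero_le_one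
      (h_speed.mono Set.Icc_subset_Ici_self) hψ0 n
    rw [mul_one] at h_incr
    exact h_incr.trans (sub_le_self _ (pow_nonneg hψ0 n))
  refine ⟨h_volume, fun r hr ↦ ?_⟩
  rw [hω]
  exact isoperimetric_of_mul_le_pow hn hB
    (intervalIntegral.integral_nonneg hr fun t ht ↦ pow_nonneg (h_nonneg t ht.1) _) (h_volume r hr)

/-- For a Cartan–Hadamard warping function ψ and n ≥ 2,
ψ(r)^n ≥ n ∫₀^r ψ^{n-1} for every r ≥ 0; in particular, with Per(B_r) = ω_n ψ(r)^{n-1},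
Vol(B_r) = ω_n ∫₀^r ψ^{n-1} and ω_n = n |B(0,1)|, every centered geodesic ball
satisfies the Euclidean isoperimetric inequality Per(B_r)^n ≥ n^n |B(0,1)| Vol(B_r)^{n-1}. -/
theorem stmt_10 (n : ℕ) (hn : 2 ≤ n) (ψ : ℝ → ℝ)
    (hψ : ContDiffOn ℝ (⊤ : ℕ∞) ψ (Set.Ici 0))
    (hψ0 : ψ 0 = 0) (hψ'0 : deriv ψ 0 = 1) (hψpos : ∀ r > (0:ℝ), 0 < ψ r)
    (hψ'' : ∀ r ≥ (0:ℝ), 0 ≤ deriv (deriv ψ) r)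
    (B ωn : ℝ) (hB : 0 < B) (hω : ωn = (n:ℝ) * B) :
    (∀ r ≥ (0:ℝ), (n:ℝ) * ∫ t in (0:ℝ)..r, ψ t ^ (n - 1) ≤ ψ r ^ n) ∧
    (∀ r ≥ (0:ℝ),
      (n:ℝ) ^ n * B * (ωn * ∫ t in (0:ℝ)..r, ψ t ^ (n - 1)) ^ (n - 1)
        ≤ (ωn * ψ r ^ (n - 1)) ^ n) := by
  have h_diff : DifferentiableAt ℝ ψ 0 :=
    differentiableAt_of_deriv_ne_zero (hψ'0.trans_ne one_ne_zero)
  have h_speed := monotoneOn_sub_mul_of_deriv2_nonneg (contDiffOn_infty.mp hψ 2)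
    h_diff.hasDerivAt.hasDerivWithinAt fun r hr ↦ hψ'' r hr.le
  exact stmt_10_general n (by omega) ψ (by simpa only [hψ'0, one_mul] using h_speed)
    hψ0.ge B ωn hB.le hω
end

section
/- Let n ≥ 2 be an integer and let ψ : [0,∞) → ℝ be a warping function satisfying the Cartan–Hadamard conditions, and suppose in addition that the radial sectional curvature K_rad(r) = -ψ''(r)/ψ(r) is monotone nondecreasing on (0,∞). Then the isoperimetric quotient I(r) = ψ(r)^{n−1} / ∫₀^r ψ(t)^{n−1} dt is monotone nonincreasing on (0,∞). -/
/-!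
The idea is a monotone form of l'Hôpital's rule, used twice. Write `q = ψ'' / ψ = -K_rad`, which is
nonincreasing, and `p = n - 1`. Where `q r > 0`, both `ψ` and `ψ'` increase on `(0, r)`, and the
derivatives of `ψ'²` and `ψ²` have quotient `q`, whence `q ≤ (ψ' / ψ)²` at `r`; where `q r ≤ 0` this
is clear. By the Riccati equation `(ψ' / ψ)' = q - (ψ' / ψ)²`, the logarithmic derivative of `ψ` is
nonincreasing. Finally, the derivatives of `ψ ^ p` and `∫ ψ ^ p` have quotient `p ψ' / ψ`, so the
isoperimetric quotient is nonincreasing too.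
-/

open Set Filter Topology

section MonotoneLHopital

variable {f g : ℝ → ℝ} {a b : ℝ}

theorem mul_le_of_mul_deriv_le_deriv {c : ℝ} (hab : a < b)
    (hfc : ContinuousOn f (Ioc a b)) (hgc : ContinuousOn g (Ioc a b))
    (hf : DifferentiableOn ℝ f (Ioo a b)) (hg : DifferentiableOn ℝ g (Ioo a b))
    (hf_nonneg : ∀ x ∈ Ioo a b, 0 ≤ f x) (hg_lim : Tendsto g (𝓝[>] a) (𝓝 0))
    (h : ∀ x ∈ Ioo a b, c * deriv g x ≤ deriv f x) :
    c * g b ≤ f b := by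
  have hmono : MonotoneOn (fun x ↦ f x - c * g x) (Ioc a b) := by
    refine monotoneOn_of_deriv_nonneg (convex_Ioc a b) (hfc.sub (hgc.const_mul c)) ?_ ?_
    · rw [interior_Ioc]
      exact hf.sub (hg.const_mul c)
    · intro x hx
      rw [interior_Ioc] at hx
      have hfx := hf.differentiableAt (isOpen_Ioo.mem_nhds hx)
      have hgx := hg.differentiableAt (isOpen_Ioo.mem_nhds hx)
      rw [deriv_fun_sub hfx (hgx.const_mul c), deriv_const_mul c hgx]
      exact sub_nonneg.2 (h x hx)
  have hlim : Tendsto (fun x ↦ -(c * g x)) (𝓝[>] a) (𝓝 0) := by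
    simpa only [mul_zero, neg_zero] using (hg_lim.const_mul c).neg
  have hle : ∀ᶠ x in 𝓝[>] a, -(c * g x) ≤ f b - c * g b := by
    filter_upwards [Ioo_mem_nhdsGT hab] with x hx
    have := hmono (Ioo_subset_Ioc_self hx) (right_mem_Ioc.2 hab) hx.2.le
    linarith [hf_nonneg x hx]
  exact sub_nonneg.1 (le_of_tendsto hlim hle)

theorem pos_of_tendsto_zero_of_deriv_pos (hg_lim : Tendsto g (𝓝[>] a) (𝓝 0))
    (hg' : ∀ x ∈ Ioo a b, 0 < deriv g x) :
    ∀ x ∈ Ioo a b, 0 < g x := by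
  intro x hx
  have hgc : ContinuousOn g (Ioo a b) := fun y hy ↦
    (differentiableAt_of_deriv_ne_zero (hg' y hy).ne').continuousAt.continuousWithinAt
  have hmono : StrictMonoOn g (Ioo a b) :=
    strictMonoOn_of_deriv_pos (convex_Ioo a b) hgc (by rwa [interior_Ioo])
  obtain ⟨y, hay, hyx⟩ := exists_between hx.1
  have hy : y ∈ Ioo a b := ⟨hay, hyx.trans hx.2⟩
  have hle : ∀ᶠ z in 𝓝[>] a, g z ≤ g y := by
    filter_upwards [Ioo_mem_nhdsGT hay] with z hz
    exact (hmono ⟨hz.1, hz.2.trans hy.2⟩ hy hz.2).le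
  exact (le_of_tendsto hg_lim hle).trans_lt (hmono hy hx hyx)

theorem antitoneOn_div_of_antitoneOn_deriv_div
    (hf : DifferentiableOn ℝ f (Ioo a b)) (hf_nonneg : ∀ x ∈ Ioo a b, 0 ≤ f x)
    (hg_lim : Tendsto g (𝓝[>] a) (𝓝 0)) (hg' : ∀ x ∈ Ioo a b, 0 < deriv g x)
    (h : AntitoneOn (fun x ↦ deriv f x / deriv g x) (Ioo a b)) :
    AntitoneOn (fun x ↦ f x / g x) (Ioo a b) := by
  have hg : DifferentiableOn ℝ g (Ioo a b) := fun x hx ↦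
    (differentiableAt_of_deriv_ne_zero (hg' x hx).ne').differentiableWithinAt
  have hg_pos := pos_of_tendsto_zero_of_deriv_pos hg_lim hg'
  have hdiv : DifferentiableOn ℝ (fun x ↦ f x / g x) (Ioo a b) :=
    hf.div hg fun x hx ↦ (hg_pos x hx).ne'
  refine antitoneOn_of_deriv_nonpos (convex_Ioo a b) hdiv.continuousOn
    (by rwa [interior_Ioo]) fun x hx ↦ ?_
  rw [interior_Ioo] at hx
  have hsub : Ioc a x ⊆ Ioo a b := fun y hy ↦ ⟨hy.1, hy.2.trans_lt hx.2⟩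
  have hsub' : Ioo a x ⊆ Ioo a b := Ioo_subset_Ioc_self.trans hsub
  have hquot : deriv f x / deriv g x * g x ≤ f x :=
    mul_le_of_mul_deriv_le_deriv hx.1 (hf.continuousOn.mono hsub) (hg.continuousOn.mono hsub)
      (hf.mono hsub') (hg.mono hsub') (fun y hy ↦ hf_nonneg y (hsub' hy)) hg_lim
      fun y hy ↦ (le_div_iff₀ (hg' y (hsub' hy))).1 (h (hsub' hy) hx hy.2.le)
  have hcross : deriv f x * g x ≤ f x * deriv g x := by
    rwa [div_mul_eq_mul_div, div_le_iff₀ (hg' x hx)] at hquot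
  have hfx := hf.differentiableAt (isOpen_Ioo.mem_nhds hx)
  have hgx := hg.differentiableAt (isOpen_Ioo.mem_nhds hx)
  rw [deriv_fun_div hfx hgx (hg_pos x hx).ne']
  exact div_nonpos_of_nonpos_of_nonneg (sub_nonpos.2 hcross) (sq_nonneg _)

end MonotoneLHopital

section Integral

variable {f : ℝ → ℝ} {a b : ℝ}

theorem hasDerivAt_integral_of_continuousOn_Ico (hf : ContinuousOn f (Ico a b)) {x : ℝ}
    (hx : x ∈ Ioo a b) : HasDerivAt (fun r ↦ ∫ t in a..r, f t) (f x) x := by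
  have hsub : uIcc a x ⊆ Ico a b := by
    rw [uIcc_of_le hx.1.le]
    exact Icc_subset_Ico_right hx.2
  have hf' : ContinuousOn f (Ioo a b) := hf.mono Ioo_subset_Ico_self
  exact intervalIntegral.integral_hasDerivAt_right (hf.mono hsub).intervalIntegrable
    (hf'.stronglyMeasurableAtFilter isOpen_Ioo x hx) (hf'.continuousAt (isOpen_Ioo.mem_nhds hx))

theorem tendsto_integral_nhdsGT_of_continuousOn_Ico (hab : a < b)
    (hf : ContinuousOn f (Ico a b)) :
    Tendsto (fun r ↦ ∫ t in a..r, f t) (𝓝[>] a) (𝓝 0) := by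
  obtain ⟨c, hac, hcb⟩ := exists_between hab
  have hint : MeasureTheory.IntegrableOn f (uIcc a c) := by
    rw [uIcc_of_le hac.le]
    exact (hf.mono (Icc_subset_Ico_right hcb)).integrableOn_Icc
  have hcont := intervalIntegral.continuousOn_primitive_interval hint a left_mem_uIcc
  rw [uIcc_of_le hac.le, continuousWithinAt_Icc_iff_Ici hac] at hcont
  simpa only [intervalIntegral.integral_same] using
    (hcont.mono Ioi_subset_Ici_self).tendsto

end Integral

section WarpingFunction

variable {ψ : ℝ → ℝ} {a b : ℝ}

theorem deriv_pos_of_deriv_deriv_nonneg (hc : ContinuousOn ψ (Ico a b)) (ha : ψ a = 0)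
    (hpos : ∀ r ∈ Ioo a b, 0 < ψ r) (hd : DifferentiableOn ℝ ψ (Ioo a b))
    (hd' : DifferentiableOn ℝ (deriv ψ) (Ioo a b))
    (hconv : ∀ r ∈ Ioo a b, 0 ≤ deriv (deriv ψ) r) :
    ∀ r ∈ Ioo a b, 0 < deriv ψ r := by
  intro r hr
  have hmono : MonotoneOn (deriv ψ) (Ioo a b) :=
    monotoneOn_of_deriv_nonneg (convex_Ioo a b) hd'.continuousOn
      (by rwa [interior_Ioo]) (by rwa [interior_Ioo])
  obtain ⟨s, hs, hslope⟩ := exists_deriv_eq_slope ψ hr.1 (hc.mono (Icc_subset_Ico_right hr.2))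
    (hd.mono (Ioo_subset_Ioo_right hr.2.le))
  calc 0 < (ψ r - ψ a) / (r - a) := by
        rw [ha, sub_zero]
        exact div_pos (hpos r hr) (sub_pos.2 hr.1)
    _ = deriv ψ s := hslope.symm
    _ ≤ deriv ψ r := hmono ⟨hs.1, hs.2.trans hr.2⟩ hr hs.2.le

theorem mul_sq_le_sq_deriv_of_mul_le_deriv_deriv {c r : ℝ} (hc : ContinuousOn ψ (Ico a b))
    (ha : ψ a = 0) (hpos : ∀ r ∈ Ioo a b, 0 < ψ r) (hd : DifferentiableOn ℝ ψ (Ioo a b))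
    (hd' : DifferentiableOn ℝ (deriv ψ) (Ioo a b)) (hr : r ∈ Ioo a b) (hc_nonneg : 0 ≤ c)
    (h : ∀ t ∈ Ioo a r, c * ψ t ≤ deriv (deriv ψ) t) :
    c * ψ r ^ 2 ≤ deriv ψ r ^ 2 := by
  have hsub : Ioc a r ⊆ Ioo a b := fun t ht ↦ ⟨ht.1, ht.2.trans_lt hr.2⟩
  have hsub' : Ioo a r ⊆ Ioo a b := Ioo_subset_Ioc_self.trans hsub
  have hψ' : ∀ t ∈ Ioo a r, 0 < deriv ψ t :=
    deriv_pos_of_deriv_deriv_nonneg (hc.mono (Ico_subset_Ico_right hr.2.le)) ha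
      (fun t ht ↦ hpos t (hsub' ht)) (hd.mono hsub') (hd'.mono hsub')
      fun t ht ↦ (mul_nonneg hc_nonneg (hpos t (hsub' ht)).le).trans (h t ht)
  have hlim : Tendsto (fun t ↦ ψ t ^ 2) (𝓝[>] a) (𝓝 0) := by
    have hab : a < b := hr.1.trans hr.2
    have hca := hc a (left_mem_Ico.2 hab)
    rw [continuousWithinAt_Ico_iff_Ici hab] at hca
    simpa [ha] using (hca.mono Ioi_subset_Ici_self).tendsto.pow 2
  have hderiv : ∀ t ∈ Ioo a r,
      c * deriv (fun x ↦ ψ x ^ 2) t ≤ deriv (fun x ↦ deriv ψ x ^ 2) t := by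
    intro t ht
    rw [deriv_fun_pow (hd.differentiableAt (isOpen_Ioo.mem_nhds (hsub' ht))),
      deriv_fun_pow (hd'.differentiableAt (isOpen_Ioo.mem_nhds (hsub' ht)))]
    simp only [Nat.cast_ofNat, Nat.add_one_sub_one, pow_one]
    linarith [mul_le_mul_of_nonneg_left (h t ht) (hψ' t ht).le]
  exact mul_le_of_mul_deriv_le_deriv hr.1 ((hd'.continuousOn.mono hsub).pow 2)
    ((hd.continuousOn.mono hsub).pow 2) ((hd'.mono hsub').fun_pow 2) ((hd.mono hsub').fun_pow 2)
    (fun t _ ↦ sq_nonneg _) hlim hderiv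

theorem deriv_deriv_div_le_sq_logDeriv (hc : ContinuousOn ψ (Ico a b)) (ha : ψ a = 0)
    (hpos : ∀ r ∈ Ioo a b, 0 < ψ r) (hd : DifferentiableOn ℝ ψ (Ioo a b))
    (hd' : DifferentiableOn ℝ (deriv ψ) (Ioo a b))
    (hq : AntitoneOn (fun r ↦ deriv (deriv ψ) r / ψ r) (Ioo a b)) :
    ∀ r ∈ Ioo a b, deriv (deriv ψ) r / ψ r ≤ logDeriv ψ r ^ 2 := by
  intro r hr
  rcases le_total (deriv (deriv ψ) r / ψ r) 0 with hq_nonpos | hq_nonneg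
  · exact hq_nonpos.trans (sq_nonneg _)
  rw [logDeriv_apply, div_pow, le_div_iff₀ (pow_pos (hpos r hr) 2)]
  refine mul_sq_le_sq_deriv_of_mul_le_deriv_deriv hc ha hpos hd hd' hr hq_nonneg fun t ht ↦ ?_
  have htb : t ∈ Ioo a b := ⟨ht.1, ht.2.trans hr.2⟩
  exact (le_div_iff₀ (hpos t htb)).1 (hq htb hr ht.2.le)

theorem antitoneOn_logDeriv_of_antitoneOn_deriv_deriv_div (hc : ContinuousOn ψ (Ico a b))
    (ha : ψ a = 0) (hpos : ∀ r ∈ Ioo a b, 0 < ψ r) (hd : DifferentiableOn ℝ ψ (Ioo a b))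
    (hd' : DifferentiableOn ℝ (deriv ψ) (Ioo a b))
    (hq : AntitoneOn (fun r ↦ deriv (deriv ψ) r / ψ r) (Ioo a b)) :
    AntitoneOn (logDeriv ψ) (Ioo a b) := by
  have hdiff : DifferentiableOn ℝ (logDeriv ψ) (Ioo a b) :=
    hd'.div hd fun r hr ↦ (hpos r hr).ne'
  refine antitoneOn_of_deriv_nonpos (convex_Ioo a b) hdiff.continuousOn
    (by rwa [interior_Ioo]) fun r hr ↦ ?_
  rw [interior_Ioo] at hr
  have hr_ne : ψ r ≠ 0 := (hpos r hr).ne'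
  have riccati : deriv (logDeriv ψ) r = deriv (deriv ψ) r / ψ r - logDeriv ψ r ^ 2 := by
    rw [logDeriv, deriv_div (hd'.differentiableAt (isOpen_Ioo.mem_nhds hr))
      (hd.differentiableAt (isOpen_Ioo.mem_nhds hr)) hr_ne, Pi.div_apply]
    field_simp
  rw [riccati]
  exact sub_nonpos.2 (deriv_deriv_div_le_sq_logDeriv hc ha hpos hd hd' hq r hr)

theorem antitoneOn_rpow_div_integral_of_antitoneOn_logDeriv {p : ℝ} (hp : 0 ≤ p)
    (hc : ContinuousOn ψ (Ico a b)) (hpos : ∀ r ∈ Ioo a b, 0 < ψ r)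
    (hd : DifferentiableOn ℝ ψ (Ioo a b)) (hlog : AntitoneOn (logDeriv ψ) (Ioo a b)) :
    AntitoneOn (fun r ↦ ψ r ^ p / ∫ t in a..r, ψ t ^ p) (Ioo a b) := by
  rcases le_or_gt b a with hba | hab
  · rw [Ioo_eq_empty hba.not_gt]
    exact subsingleton_empty.antitoneOn _
  have hcp : ContinuousOn (fun t ↦ ψ t ^ p) (Ico a b) := hc.rpow_const fun _ _ ↦ Or.inr hp
  have hpp : ∀ r ∈ Ioo a b, 0 < ψ r ^ p := fun r hr ↦ Real.rpow_pos_of_pos (hpos r hr) p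
  have hvol : ∀ r ∈ Ioo a b, HasDerivAt (fun r ↦ ∫ t in a..r, ψ t ^ p) (ψ r ^ p) r :=
    fun r hr ↦ hasDerivAt_integral_of_continuousOn_Ico hcp hr
  have hquot : EqOn (fun r ↦ p * logDeriv ψ r)
      (fun r ↦ deriv (fun t ↦ ψ t ^ p) r / deriv (fun r ↦ ∫ t in a..r, ψ t ^ p) r)
      (Ioo a b) := by
    intro r hr
    have hψr := (hd.differentiableAt (isOpen_Ioo.mem_nhds hr)).hasDerivAt
    have hpr := hpos r hr
    simp only [(hψr.rpow_const (p := p) (Or.inl hpr.ne')).deriv, (hvol r hr).deriv,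
      logDeriv_apply, Real.rpow_sub_one hpr.ne']
    have := (hpp r hr).ne'
    field_simp
  refine antitoneOn_div_of_antitoneOn_deriv_div
    (hd.rpow_const fun r hr ↦ Or.inl (hpos r hr).ne') (fun r hr ↦ (hpp r hr).le)
    (tendsto_integral_nhdsGT_of_continuousOn_Ico hab hcp)
    (fun r hr ↦ (hvol r hr).deriv ▸ hpp r hr) (AntitoneOn.congr ?_ hquot)
  exact fun r hr s hs hrs ↦ mul_le_mul_of_nonneg_left (hlog hr hs hrs) hp

end WarpingFunction

theorem stmt_12_general {ψ : ℝ → ℝ} {b p : ℝ} (hp : 0 ≤ p)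
    (hc : ContinuousOn ψ (Ico 0 b)) (hψ0 : ψ 0 = 0) (hpos : ∀ r ∈ Ioo 0 b, 0 < ψ r)
    (hd : DifferentiableOn ℝ ψ (Ioo 0 b)) (hd' : DifferentiableOn ℝ (deriv ψ) (Ioo 0 b))
    (hK : MonotoneOn (fun r ↦ -(deriv (deriv ψ) r) / ψ r) (Ioo 0 b)) :
    AntitoneOn (fun r ↦ ψ r ^ p / ∫ t in (0 : ℝ)..r, ψ t ^ p) (Ioo 0 b) := by
  have hq : AntitoneOn (fun r ↦ deriv (deriv ψ) r / ψ r) (Ioo 0 b) := by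
    simpa only [neg_div, neg_neg] using hK.neg
  exact antitoneOn_rpow_div_integral_of_antitoneOn_logDeriv hp hc hpos hd
    (antitoneOn_logDeriv_of_antitoneOn_deriv_deriv_div hc hψ0 hpos hd hd' hq)

/-- For a Cartan–Hadamard warping function ψ and n ≥ 2, if the radial
sectional curvature K_rad = -ψ''/ψ is monotone nondecreasing on (0,∞), then the
isoperimetric quotient I(r) = ψ(r)^{n-1}/∫₀^r ψ^{n-1} is monotone nonincreasing on (0,∞). -/
theorem stmt_12 (n : ℕ) (hn : 2 ≤ n) (ψ : ℝ → ℝ)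
    (hψ : ContDiffOn ℝ (⊤ : ℕ∞) ψ (Set.Ici 0))
    (hψ0 : ψ 0 = 0) (hψ'0 : deriv ψ 0 = 1) (hψpos : ∀ r > (0:ℝ), 0 < ψ r)
    (hψ'' : ∀ r ≥ (0:ℝ), 0 ≤ deriv (deriv ψ) r)
    (Krad : ℝ → ℝ)
    (hKrad : Krad = fun r => -(deriv (deriv ψ) r) / ψ r)
    (hmono : MonotoneOn Krad (Set.Ioi 0)) :
    AntitoneOn (fun r => ψ r ^ (n - 1) / ∫ t in (0:ℝ)..r, ψ t ^ (n - 1))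
      (Set.Ioi 0) := by
  subst hKrad
  have hψ_Ioi : ContDiffOn ℝ (⊤ : ℕ∞) ψ (Ioi 0) := hψ.mono Ioi_subset_Ici_self
  have hd : DifferentiableOn ℝ ψ (Ioi 0) := hψ_Ioi.differentiableOn (by simp)
  have hd' : DifferentiableOn ℝ (deriv ψ) (Ioi 0) :=
    (hψ_Ioi.deriv_of_isOpen (m := 1) isOpen_Ioi (by norm_cast)).differentiableOn one_ne_zero
  intro r hr s hs hrs
  have hanti := stmt_12_general (b := s + 1) (Nat.cast_nonneg (n - 1))
    (hψ.continuousOn.mono Ico_subset_Ici_self) hψ0 (fun t ht ↦ hψpos t ht.1)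
    (hd.mono Ioo_subset_Ioi_self) (hd'.mono Ioo_subset_Ioi_self) (hmono.mono Ioo_subset_Ioi_self)
  simp only [Real.rpow_natCast] at hanti
  exact hanti ⟨hr, hrs.trans_lt (lt_add_one s)⟩ ⟨hs, lt_add_one s⟩ hrs
end
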